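/- arXiv:math/0003152 — 2 statements merged into one kernel-verified Lean document; each statement's English description precedes it below -/
import Mathlib

section
/- Let A be a C*-algebra, r > 0, and let (φ_m) be a normalized sequence in A' such that r·Σ|α_m| ≤ ‖Σ α_m φ_m‖ ≤ Σ|α_m| for all scalars. Then for every ε > 0 there exist a subsequence (φ_{m_n}), a sequence (a_n) of pairwise orthogonal positive normalized elements of A, and a sequence (b_n) of pairwise orthogonal positive normalized elements of A, such that |φ_{m_n}|(a_n) > (1−ε)r² and |φ*_{m_n}|(b_n) > (1−ε)r² for all n. -/
open scoped ComplexOrder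

universe u

/-- A witness that `absψ` is the absolute value `|ψ|` of the functional `ψ` on a
C*-algebra `A`: in some ambient unital C*-algebra `B` (playing the role of the
enveloping von Neumann algebra `A''`) into which `A` embeds isometrically and to
which `ψ` extends with the same norm, there is a partial isometry `u` realizing
the polar decomposition `ψ = u |ψ|`, `|ψ| = u* ψ`. -/
structure PolarWitness (A : Type u) [NonUnitalCStarAlgebra A]
    (ψ absψ : A →L[ℂ] ℂ) : Type (u + 1) where
  B : Type
  [instRing : NormedRing B]
  [instStarRing : StarRing B]
  [instCStar : CStarRing B]
  [instAlg : NormedAlgebra ℂ B]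
  [instStarMod : StarModule ℂ B]
  [instComplete : CompleteSpace B]
  ι : A → B
  ι_add : ∀ x y, ι (x + y) = ι x + ι y
  ι_smul : ∀ (c : ℂ) (x : A), ι (c • x) = c • ι x
  ι_mul : ∀ x y, ι (x * y) = ι x * ι y
  ι_star : ∀ x, ι (star x) = star (ι x)
  ι_isometry : ∀ x, ‖ι x‖ = ‖x‖
  Φ : B →L[ℂ] ℂ
  absΦ : B →L[ℂ] ℂ
  u : B
  hΦ : ∀ x, Φ (ι x) = ψ x
  hΦnorm : ‖Φ‖ = ‖ψ‖
  hu : u * star u * u = u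
  hu1 : ‖u‖ ≤ 1
  habsΦpos : ∀ b, 0 ≤ absΦ (star b * b)
  habsΦnorm : ‖absΦ‖ = ‖ψ‖
  hpolar : ∀ b, Φ b = absΦ (b * u)
  habs : ∀ b, absΦ b = Φ (b * star u)
  habsψ : ∀ x, absΦ (ι x) = absψ x

/-- `absψ` is the absolute value `|ψ|` from the polar decomposition of `ψ`. -/
def IsAbsValue {A : Type*} [NonUnitalCStarAlgebra A] (ψ absψ : A →L[ℂ] ℂ) : Prop :=
  Nonempty (PolarWitness A ψ absψ)


section PartOne

/-- The semi-inner product `⟨x, y⟩ = f (x* y)` of a positive functional. -/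
@[reducible]
noncomputable def posCore {B : Type*} [NonUnitalRing B] [StarRing B] [Module ℂ B] [StarModule ℂ B]
    [IsScalarTower ℂ B B] [SMulCommClass ℂ B B] (f : B →ₗ[ℂ] ℂ)
    (hf : ∀ b, 0 ≤ f (star b * b)) : PreInnerProductSpace.Core ℂ B where
  inner x y := f (star x * y)
  conj_inner_symm x y := by
    have h1 := hf (x + y)
    have h2 := hf (x + Complex.I • y)
    have hx := hf x
    have hy := hf y
    rw [Complex.nonneg_iff] at h1 h2 hx hy
    have e1 := h1.2
    have e2 := h2.2
    have ex := hx.2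
    have ey := hy.2
    simp only [star_add, star_smul, mul_add, add_mul, map_add, smul_mul_assoc, mul_smul_comm,
      map_smul, smul_eq_mul, Complex.add_im, Complex.star_def, Complex.conj_I, Complex.mul_im,
      Complex.I_re, Complex.I_im, Complex.neg_im, Complex.neg_re, Complex.mul_re] at e1 e2
    apply Complex.ext
    · simp only [Complex.conj_re]; linarith
    · simp only [Complex.conj_im]; linarith
  re_inner_nonneg x := (Complex.nonneg_iff.1 (hf x)).1
  add_left x y z := by simp [add_mul]
  smul_left x y c := by simp [star_smul, smul_mul_assoc]

theorem pos_cauchy_schwarz {B : Type*} [NonUnitalRing B] [StarRing B] [Module ℂ B]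
    [StarModule ℂ B]
    [IsScalarTower ℂ B B] [SMulCommClass ℂ B B] (f : B →ₗ[ℂ] ℂ)
    (hf : ∀ b, 0 ≤ f (star b * b)) (x y : B) :
    ‖f (star x * y)‖ ^ 2 ≤ (f (star x * x)).re * (f (star y * y)).re := by
  let := posCore f hf
  have h := InnerProductSpace.Core.inner_mul_inner_self_le (𝕜 := ℂ) (F := B) x y
  rw [InnerProductSpace.Core.norm_inner_symm y x, ← sq] at h
  exact h

/-- `x ↦ √(f (x x*))` is a Hilbertian seminorm. -/
theorem exists_pos_seminorm {B : Type*} [NonUnitalRing B] [StarRing B] [Module ℂ B]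
    [StarModule ℂ B]
    [IsScalarTower ℂ B B] [SMulCommClass ℂ B B] (f : B →ₗ[ℂ] ℂ)
    (hf : ∀ b, 0 ≤ f (star b * b)) :
    ∃ q : Seminorm ℝ B, ∀ x, q x ^ 2 = (f (x * star x)).re := by
  have hnn : ∀ x, 0 ≤ (f (x * star x)).re := fun x => by
    have := hf (star x)
    rw [star_star] at this
    exact (Complex.nonneg_iff.1 this).1
  have hcs : ∀ x y, (f (x * star y)).re ≤
      √((f (x * star x)).re) * √((f (y * star y)).re) := by
    intro x y
    have := pos_cauchy_schwarz f hf (star x) (star y)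
    simp only [star_star] at this
    refine (Complex.re_le_norm _).trans ?_
    rw [← Real.sqrt_mul (hnn x)]
    exact Real.le_sqrt_of_sq_le this
  refine ⟨Seminorm.of (fun x => √((f (x * star x)).re)) ?_ ?_, fun x => ?_⟩
  · intro x y
    rw [Real.sqrt_le_left (by positivity)]
    have h1 := hcs x y
    have h2 := hcs y x
    have e : (f ((x + y) * star (x + y))).re = (f (x * star x)).re + (f (x * star y)).re
        + (f (y * star x)).re + (f (y * star y)).re := by
      simp [add_mul, mul_add]; ring
    rw [e]
    nlinarith [Real.sq_sqrt (hnn x), Real.sq_sqrt (hnn y)]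
  · intro c x
    have e : (f ((c • x) * star (c • x))).re = c ^ 2 * (f (x * star x)).re := by
      have : c • x = (c : ℂ) • x := rfl
      rw [this, star_smul, smul_mul_assoc, mul_smul_comm, map_smul, map_smul]
      simp; ring
    rw [e, Real.sqrt_mul (sq_nonneg c), Real.sqrt_sq_eq_abs, Real.norm_eq_abs]
  · exact Real.sq_sqrt (hnn x)

theorem exists_split {E : Type*} [AddCommGroup E] [Module ℝ E] (p q : Seminorm ℝ E)
    (f : E →ₗ[ℝ] ℝ) (h : ∀ x, f x ≤ p x + q x) :
    ∃ g : E →ₗ[ℝ] ℝ, (∀ x, |g x| ≤ q x) ∧ ∀ x, |f x - g x| ≤ p x := by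
  let S : Submodule ℝ (E × E) := LinearMap.range ((LinearMap.id (R := ℝ) (M := E)).prod LinearMap.id)
  have hS : ∀ z : S, z.1.1 = z.1.2 := by rintro ⟨_, x, rfl⟩; rfl
  obtain ⟨g, hg1, hg2⟩ := Module.Dual.exists_extension_of_le_seminorm_real S
    (f ∘ₗ LinearMap.fst ℝ E E ∘ₗ S.subtype)
    (p := p.comp (LinearMap.fst ℝ E E) + q.comp (LinearMap.snd ℝ E E)) (by
      intro z
      have := h z.1.1
      simpa [← hS z] using this)
  have hd : ∀ x, g (x, x) = f x := fun x => hg1 ⟨(x, x), x, rfl⟩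
  refine ⟨g ∘ₗ LinearMap.inr ℝ E E, fun x => ?_, fun x => ?_⟩
  · simpa using hg2 (0, x)
  · have : f x - (g ∘ₗ LinearMap.inr ℝ E E) x = g (x, 0) := by
      rw [← hd]; simp [← map_sub]
    rw [this]
    simpa using hg2 (x, 0)

theorem sign_choice {E : Type*} [AddCommGroup E] [Module ℝ E] (q : Seminorm ℝ E)
    (hq : ∀ x y, q (x + y) ^ 2 + q (x - y) ^ 2 = 2 * q x ^ 2 + 2 * q y ^ 2)
    (f g : E →ₗ[ℝ] ℝ) (F G : ℝ) (hF : ∀ x, |f x| ≤ F * q x)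
    (hG : ∀ x, |g x| ≤ G * q x) :
    (∀ x, |(f + g) x| ≤ √(F ^ 2 + G ^ 2) * q x) ∨ (∀ x, |(f - g) x| ≤ √(F ^ 2 + G ^ 2) * q x) := by
  set K := √(F ^ 2 + G ^ 2) with hK
  have hK0 : 0 ≤ K := Real.sqrt_nonneg _
  have hK2 : K ^ 2 = F ^ 2 + G ^ 2 := Real.sq_sqrt (by positivity)
  have key : ∀ h : E →ₗ[ℝ] ℝ, (∀ x, |h x| ≤ (F + G) * q x) → (¬ ∀ x, |h x| ≤ K * q x) →
      ∃ x, q x = 1 ∧ K < h x := by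
    intro h hh hn
    push Not at hn
    obtain ⟨x, hx⟩ := hn
    have hqx : 0 < q x := by
      rcases (apply_nonneg q x).lt_or_eq with h' | h'
      · exact h'
      · have := hh x
        rw [← h'] at this hx
        simp at this hx
        exact absurd this hx
    rcases abs_cases (h x) with ⟨e, _⟩ | ⟨e, _⟩
    · refine ⟨(q x)⁻¹ • x, ?_, ?_⟩
      · rw [map_smul_eq_mul, Real.norm_eq_abs, abs_of_pos (by positivity)]
        field_simp
      · rw [map_smul, smul_eq_mul, ← div_eq_inv_mul, lt_div_iff₀ hqx, ← e]; exact hx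
    · refine ⟨(-(q x)⁻¹) • x, ?_, ?_⟩
      · rw [map_smul_eq_mul, norm_neg, Real.norm_eq_abs, abs_of_pos (by positivity)]
        field_simp
      · rw [map_smul, smul_eq_mul, neg_mul, ← mul_neg, ← e, ← div_eq_inv_mul, lt_div_iff₀ hqx]
        exact hx
  by_contra hcon
  rw [not_or] at hcon
  obtain ⟨x, hx1, hx2⟩ := key (f + g) (fun x => by
    refine (abs_add_le _ _).trans ?_
    linarith [hF x, hG x]) hcon.1
  obtain ⟨y, hy1, hy2⟩ := key (f - g) (fun x => by
    refine (abs_sub _ _).trans ?_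
    linarith [hF x, hG x]) hcon.2
  have h1 := (le_abs_self _).trans (hF (x + y))
  have h2 := (le_abs_self _).trans (hG (x - y))
  have h3 := hq x y
  rw [hx1, hy1] at h3
  simp only [LinearMap.add_apply, LinearMap.sub_apply, map_add, map_sub] at *
  have h4 : (F * q (x + y) + G * q (x - y)) ^ 2 ≤ (2 * K) ^ 2 := by
    nlinarith [sq_nonneg (F * q (x - y) - G * q (x + y))]
  have h5 := abs_le_of_sq_le_sq h4 (by positivity)
  linarith [le_abs_self (F * q (x + y) + G * q (x - y))]

theorem sign_sum_choice {E : Type*} [AddCommGroup E] [Module ℝ E] (q : Seminorm ℝ E)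
    (hq : ∀ x y, q (x + y) ^ 2 + q (x - y) ^ 2 = 2 * q x ^ 2 + 2 * q y ^ 2)
    (C : ℝ) (g : ℕ → E →ₗ[ℝ] ℝ) (s : Finset ℕ)
    (hg : ∀ m ∈ s, ∀ x, |g m x| ≤ C * q x) :
    ∃ σ : ℕ → ℝ, (∀ m, |σ m| = 1) ∧ ∀ x, |(∑ m ∈ s, σ m • g m) x| ≤ √(s.card * C ^ 2) * q x := by
  classical
  induction s using Finset.induction_on with
  | empty => exact ⟨fun _ => 1, by simp, by simp⟩
  | insert a s ha ih =>
    obtain ⟨σ, h1, h2⟩ := ih (fun m hm => hg m (Finset.mem_insert_of_mem hm))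
    have hupd : ∀ t : ℝ, ∑ m ∈ insert a s, (Function.update σ a t) m • g m
        = ∑ m ∈ s, σ m • g m + t • g a := by
      intro t
      rw [Finset.sum_insert ha, add_comm]
      congr 1
      · refine Finset.sum_congr rfl fun m hm => ?_
        rw [Function.update_of_ne (by rintro rfl; exact ha hm)]
      · simp
    have hsq : √(√(s.card * C ^ 2) ^ 2 + C ^ 2) = √((insert a s).card * C ^ 2) := by
      rw [Real.sq_sqrt (by positivity), Finset.card_insert_of_notMem ha]
      push_cast; ring_nf
    have hab : ∀ t : ℝ, |t| = 1 → ∀ m, |Function.update σ a t m| = 1 := by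
      intro t ht m
      by_cases hm : m = a
      · subst hm; simpa using ht
      · rw [Function.update_of_ne hm]; exact h1 m
    rcases sign_choice q hq _ (g a) _ C h2
      (hg a (Finset.mem_insert_self _ _)) with h | h
    · refine ⟨Function.update σ a 1, hab 1 (by simp), ?_⟩
      rw [hupd, ← hsq, one_smul]; exact h
    · refine ⟨Function.update σ a (-1), hab (-1) (by simp), ?_⟩
      rw [hupd, ← hsq]
      intro x
      have h' := h x
      simp only [LinearMap.add_apply, LinearMap.sub_apply, LinearMap.smul_apply, smul_eq_mul,
        neg_one_mul, ← sub_eq_add_neg] at h' ⊢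
      exact h'

end PartOne

section PartTwo

theorem opNorm_le_of_re {A : Type*} [NormedAddCommGroup A] [NormedSpace ℂ A] (f : A →L[ℂ] ℂ)
    (K : ℝ) (hK : 0 ≤ K) (h : ∀ x, (f x).re ≤ K * ‖x‖) : ‖f‖ ≤ K := by
  refine f.opNorm_le_bound hK fun x => ?_
  by_cases h0 : f x = 0
  · rw [h0, norm_zero]; positivity
  have hn : (‖f x‖ : ℂ) ≠ 0 := by simpa using h0
  have h1 := h ((starRingEnd ℂ (f x) / ‖f x‖) • x)
  rw [map_smul, norm_smul, smul_eq_mul, norm_div, RCLike.norm_conj, Complex.norm_real, norm_norm,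
    div_self (by simpa using h0), one_mul, div_mul_eq_mul_div, mul_comm, Complex.mul_conj,
    Complex.normSq_eq_norm_sq] at h1
  have : ((‖f x‖ ^ 2 : ℝ) : ℂ) / ‖f x‖ = (‖f x‖ : ℂ) := by
    push_cast
    field_simp
  rw [this] at h1
  simpa using h1

theorem step_exists {A : Type*} [NonUnitalCStarAlgebra A] (φ : ℕ → A →L[ℂ] ℂ) (ω : A →L[ℂ] ℂ)
    (hω : ∀ x, 0 ≤ ω (star x * x)) (hω1 : ∀ x, ‖ω x‖ ≤ ‖x‖) (hφ1 : ∀ m x, ‖φ m x‖ ≤ ‖x‖)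
    (r : ℝ)
    (hl1 : ∀ (s : Finset ℕ) (σ : ℕ → ℝ), (∀ m, |σ m| = 1) →
      r * s.card ≤ ‖∑ m ∈ s, (σ m : ℂ) • φ m‖)
    (M : Set ℕ) (hM : M.Infinite) (E : A →ₗ[ℂ] A) (hE : ∀ x, ‖E x‖ ≤ ‖x‖) (η ρ : ℝ)
    (hη : 0 ≤ η) (hρ : 0 ≤ ρ) (hr : ρ + η < r)
    (hφE : ∀ m ∈ M, ∀ x, ‖φ m x - φ m (E x)‖ ≤ η * ‖x‖) (δ : ℝ) (hδ : 0 < δ) :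
    ∃ m ∈ M, ∃ x, ‖x‖ ≤ 1 ∧ (ω (E x * star (E x))).re < δ ∧ ρ < ‖φ m (E x)‖ := by
  by_contra! hcon
  obtain ⟨q0, hq0⟩ := exists_pos_seminorm (ω : A →ₗ[ℂ] ℂ) hω
  let q : Seminorm ℝ A := q0.comp (E.restrictScalars ℝ)
  have hq : ∀ x, q x ^ 2 = (ω (E x * star (E x))).re := fun x => hq0 (E x)
  have hqp : ∀ x y, q (x + y) ^ 2 + q (x - y) ^ 2 = 2 * q x ^ 2 + 2 * q y ^ 2 := by
    intro x y
    simp only [hq, map_add, map_sub, star_add, star_sub, mul_add, add_mul, mul_sub, sub_mul,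
      Complex.add_re, Complex.sub_re]
    ring
  have hqn : ∀ x, q x ≤ ‖x‖ := by
    intro x
    refine abs_le_of_sq_le_sq' ?_ (norm_nonneg x) |>.2
    rw [hq]
    calc (ω (E x * star (E x))).re ≤ ‖ω (E x * star (E x))‖ := Complex.re_le_norm _
      _ ≤ ‖E x * star (E x)‖ := hω1 _
      _ = ‖E x‖ ^ 2 := by rw [CStarRing.norm_self_mul_star, sq]
      _ ≤ ‖x‖ ^ 2 := by gcongr; exact hE x
  set C : ℝ := 1 / √δ with hC
  have hsδ : 0 < √δ := Real.sqrt_pos.2 hδ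
  have hC0 : 0 < C := by positivity
  have bound : ∀ m ∈ M, ∀ x, ‖φ m (E x)‖ ≤ ρ * ‖x‖ + C * q x := by
    intro m hm x
    have hqx := apply_nonneg q x
    by_cases hx : x = 0
    · subst hx; simp
    have hn : 0 < ‖x‖ := norm_pos_iff.2 hx
    by_cases hc : q x < √δ * ‖x‖
    · have h1 := hcon m hm ((‖x‖⁻¹ : ℝ) • x) (by
        rw [norm_smul, norm_inv, norm_norm, inv_mul_cancel₀ hn.ne']) (by
        rw [← hq, map_smul_eq_mul, norm_inv, norm_norm, ← Real.sq_sqrt hδ.le]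
        have : ‖x‖⁻¹ * q x < √δ := by
          rw [← div_eq_inv_mul, div_lt_iff₀ hn]; exact hc
        gcongr)
      have e : ((‖x‖⁻¹ : ℝ) • x) = ((‖x‖⁻¹ : ℝ) : ℂ) • x := rfl
      rw [e, map_smul, map_smul, norm_smul, Complex.norm_real, norm_inv, norm_norm,
        ← div_eq_inv_mul, div_le_iff₀ hn] at h1
      have : 0 ≤ C * q x := by positivity
      linarith
    · push Not at hc
      have h1 : ‖x‖ ≤ C * q x := by
        rw [hC, one_div, ← div_eq_inv_mul, le_div_iff₀ hsδ, mul_comm]; exact hc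
      have h2 := (hφ1 m (E x)).trans (hE x)
      have : 0 ≤ ρ * ‖x‖ := by positivity
      linarith
  have hsplit : ∀ m, ∃ g : A →ₗ[ℝ] ℝ, m ∈ M → (∀ x, |g x| ≤ C * q x) ∧
      ∀ x, |(φ m x).re - g x| ≤ (ρ + η) * ‖x‖ := by
    intro m
    by_cases hm : m ∈ M
    · let c1 : NNReal := ⟨ρ + η, by positivity⟩
      let c2 : NNReal := ⟨C, hC0.le⟩
      obtain ⟨g, h1, h2⟩ := exists_split (c1 • normSeminorm ℝ A) (c2 • q)
        (Complex.reLm ∘ₗ ((φ m : A →ₗ[ℂ] ℂ).restrictScalars ℝ)) (by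
          intro x
          have h1 := bound m hm x
          have h2 := hφE m hm x
          have h3 : (φ m x).re ≤ (ρ + η) * ‖x‖ + C * q x := by
            have : φ m x = (φ m x - φ m (E x)) + φ m (E x) := by ring
            rw [this, Complex.add_re]
            linarith [Complex.re_le_norm (φ m x - φ m (E x)), Complex.re_le_norm (φ m (E x))]
          exact h3)
      exact ⟨g, fun _ => ⟨h1, h2⟩⟩
    · exact ⟨0, fun h => absurd h hm⟩
  choose g hg using hsplit
  obtain ⟨N, hN⟩ := exists_nat_gt ((C / (r - (ρ + η))) ^ 2)
  have hd : 0 < r - (ρ + η) := by linarith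
  obtain ⟨s, hsM, hsN⟩ := hM.exists_subset_card_eq N
  obtain ⟨σ, hσ1, hσ2⟩ := sign_sum_choice q hqp C g s (fun m hm => (hg m (hsM hm)).1)
  have h1 := hl1 s σ hσ1
  have h2 : ‖∑ m ∈ s, (σ m : ℂ) • φ m‖ ≤ (ρ + η) * N + √(N * C ^ 2) := by
    refine opNorm_le_of_re _ _ (by positivity) fun x => ?_
    have e : ((∑ m ∈ s, (σ m : ℂ) • φ m) x).re
        = ∑ m ∈ s, σ m * ((φ m x).re - g m x) + (∑ m ∈ s, σ m • g m) x := by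
      simp only [sum_apply, smul_apply, Complex.re_sum,
        LinearMap.sum_apply, LinearMap.smul_apply, ← Finset.sum_add_distrib, smul_eq_mul,
        Complex.re_ofReal_mul]
      refine Finset.sum_congr rfl fun m _ => ?_
      ring
    rw [e, add_mul]
    have h3 : ∑ m ∈ s, σ m * ((φ m x).re - g m x) ≤ (ρ + η) * N * ‖x‖ := by
      calc ∑ m ∈ s, σ m * ((φ m x).re - g m x) ≤ ∑ m ∈ s, (ρ + η) * ‖x‖ := by
            refine Finset.sum_le_sum fun m hm => (le_abs_self _).trans ?_
            rw [abs_mul, hσ1, one_mul]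
            exact (hg m (hsM hm)).2 x
        _ = (ρ + η) * N * ‖x‖ := by rw [Finset.sum_const, hsN, nsmul_eq_mul]; ring
    have h4 : (∑ m ∈ s, σ m • g m) x ≤ √(N * C ^ 2) * ‖x‖ := by
      refine (le_abs_self _).trans ((hσ2 x).trans ?_)
      rw [hsN]
      exact mul_le_mul_of_nonneg_left (hqn x) (Real.sqrt_nonneg _)
    linarith
  rw [hsN] at h1
  have hN0 : (0 : ℝ) < N := lt_of_le_of_lt (sq_nonneg _) hN
  have h5 : √(N * C ^ 2) < (r - (ρ + η)) * N := by
    rw [Real.sqrt_lt' (by positivity)]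
    rw [div_pow, div_lt_iff₀ (by positivity)] at hN
    nlinarith
  nlinarith

end PartTwo

section PartThree

theorem annih_of_sq_le {A : Type*} [NonUnitalCStarAlgebra A] [PartialOrder A] [StarOrderedRing A]
    (d a c : A) (K : ℝ) (hd : IsSelfAdjoint d) (hc : IsSelfAdjoint c) (hda : d * a = 0)
    (h : c * c ≤ K • a) : d * c = 0 := by
  have h1 : d * (c * c) * d ≤ 0 := by
    have := star_left_conjugate_le_conjugate h d
    rw [hd.star_eq, mul_smul_comm, hda, smul_zero, zero_mul] at this
    exact this
  have h2 : (d * c) * star (d * c) = d * (c * c) * d := by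
    rw [star_mul, hd.star_eq, hc.star_eq]; simp only [mul_assoc]
  have h3 : 0 ≤ (d * c) * star (d * c) := mul_star_self_nonneg _
  rw [h2] at h3
  have h4 := le_antisymm h1 h3
  rw [← h2] at h4
  exact CStarRing.mul_star_self_eq_zero_iff _ |>.1 h4

theorem norm_sub_mul_contr {A : Type*} [NonUnitalCStarAlgebra A] [PartialOrder A] [StarOrderedRing A]
    (p : A) (hp : IsSelfAdjoint p) (h : 0 ≤ p + p - p * p) (x : A) : ‖x - p * x‖ ≤ ‖x‖ := by
  have e : star (x - p * x) * (x - p * x) = star x * x - star x * (p + p - p * p) * x := by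
    rw [star_sub, star_mul, hp.star_eq]
    noncomm_ring
  have h1 : star (x - p * x) * (x - p * x) ≤ star x * x := by
    rw [e]
    exact sub_le_self _ (star_left_conjugate_nonneg h x)
  have h2 := CStarAlgebra.norm_le_norm_of_nonneg_of_le (star_mul_self_nonneg _) h1
  rw [CStarRing.norm_star_mul_self, CStarRing.norm_star_mul_self] at h2
  exact abs_le_of_sq_le_sq' (by nlinarith) (norm_nonneg x) |>.2

theorem exists_cut {A : Type*} [NonUnitalCStarAlgebra A] [PartialOrder A] [StarOrderedRing A]
    (a : A) (ha : 0 ≤ a) (ha1 : ‖a‖ ≤ 1) (τ : ℝ) (hτ : 0 < τ) :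
    ∃ c p : A, 0 ≤ c ∧ IsSelfAdjoint p ∧ ‖c‖ ≤ 1 ∧ ‖a - c‖ ≤ τ ∧ c * p = c ∧
      p * p ≤ τ⁻¹ • a ∧ 0 ≤ p + p - p * p ∧ c * c ≤ (1 : ℝ) • a := by
  have hsa : IsSelfAdjoint a := .of_nonneg ha
  have hpos : ∀ t ∈ quasispectrum ℝ a, 0 ≤ t := quasispectrum_nonneg_of_nonneg a ha
  have hid : cfcₙ (fun t : ℝ => t) a = a := cfcₙ_id' ℝ a
  have hle : ∀ t ∈ quasispectrum ℝ a, t ≤ 1 := by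
    intro t ht
    have := norm_apply_le_norm_cfcₙ (fun t : ℝ => t) a ht
    rw [hid] at this
    exact (le_abs_self t).trans (this.trans ha1)
  let f : ℝ → ℝ := fun t => max (t - τ) 0
  let g : ℝ → ℝ := fun t => min (τ⁻¹ * t) 1
  have hf : Continuous f := by fun_prop
  have hg : Continuous g := by fun_prop
  have hf0 : f 0 = 0 := by simp [f, hτ.le]
  have hg0 : g 0 = 0 := by simp [g]
  have hf1 : ∀ t, 0 ≤ f t := fun t => le_max_right _ _
  have hft : ∀ t, 0 ≤ t → f t ≤ t := fun t ht => max_le (by linarith) ht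
  have hg1 : ∀ t, g t ≤ 1 := fun t => min_le_right _ _
  have hgn : ∀ t, 0 ≤ t → 0 ≤ g t := fun t ht => le_min (by positivity) zero_le_one
  refine ⟨cfcₙ f a, cfcₙ g a, cfcₙ_nonneg fun t _ => hf1 t, IsSelfAdjoint.cfcₙ, ?_, ?_, ?_,
    ?_, ?_, ?_⟩
  · refine norm_cfcₙ_le fun t ht => ?_
    rw [Real.norm_eq_abs, abs_of_nonneg (hf1 t)]
    exact (hft t (hpos t ht)).trans (hle t ht)
  · have : a - cfcₙ f a = cfcₙ (fun t => t - f t) a := by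
      rw [cfcₙ_sub (fun t => t) f a (by fun_prop) rfl hf.continuousOn hf0, hid]
    rw [this]
    refine norm_cfcₙ_le fun t ht => ?_
    rw [Real.norm_eq_abs, abs_of_nonneg (by linarith [hft t (hpos t ht)])]
    have : t - τ ≤ f t := le_max_left _ _
    linarith
  · rw [← cfcₙ_mul f g a hf.continuousOn hf0 hg.continuousOn hg0]
    refine cfcₙ_congr fun t ht => ?_
    by_cases h : t ≤ τ
    · have : f t = 0 := max_eq_right (by linarith)
      simp [this]
    · have : g t = 1 := min_eq_right (by
        rw [← div_eq_inv_mul, le_div_iff₀ hτ]; linarith)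
      simp [this]
  · rw [← cfcₙ_mul g g a hg.continuousOn hg0 hg.continuousOn hg0]
    have : τ⁻¹ • a = cfcₙ (fun t => τ⁻¹ * t) a := by
      rw [cfcₙ_const_mul τ⁻¹ (fun t => t) a, hid]
    rw [this]
    refine cfcₙ_mono (fun t ht => ?_) (hg.mul hg).continuousOn (by fun_prop) (by simp [hg0]) (by simp)
    have h1 := hgn t (hpos t ht)
    have h2 : g t ≤ τ⁻¹ * t := min_le_left _ _
    nlinarith [hg1 t]
  · rw [← cfcₙ_mul g g a hg.continuousOn hg0 hg.continuousOn hg0,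
      ← cfcₙ_add g g a hg.continuousOn hg0 hg.continuousOn hg0,
      ← cfcₙ_sub (fun x => g x + g x) (fun x => g x * g x) a (hg.add hg).continuousOn (by simp [hg0]) (hg.mul hg).continuousOn
        (by simp [hg0])]
    refine cfcₙ_nonneg fun t ht => ?_
    nlinarith [hg1 t, hgn t (hpos t ht)]
  · rw [one_smul, ← cfcₙ_mul f f a hf.continuousOn hf0 hf.continuousOn hf0]
    conv_rhs => rw [← hid]
    refine cfcₙ_mono (fun t ht => ?_) (hf.mul hf).continuousOn (by fun_prop) (by simp [hf0]) rfl
    nlinarith [hf1 t, hft t (hpos t ht), hle t ht]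

end PartThree

section PartFour

open Filter Topology

structure SelState (A : Type*) [NonUnitalCStarAlgebra A] where
  idx : ℕ
  el : A
  S : Set ℕ
  E : A →ₗ[ℂ] A
  er : ℝ

structure SelState.Valid {A : Type*} [NonUnitalCStarAlgebra A] (s : SelState A)
    (φ : ℕ → A →L[ℂ] ℂ) (U : Ultrafilter ℕ) (η : ℝ) : Prop where
  mem : s.S ∈ U
  contr : ∀ x, ‖s.E x‖ ≤ ‖x‖
  er_nonneg : 0 ≤ s.er
  er_lt : s.er < η
  close : ∀ m ∈ s.S, ∀ x, ‖φ m x - φ m (s.E x)‖ ≤ s.er * ‖x‖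

theorem pos_mono {A : Type*} [NonUnitalCStarAlgebra A] [PartialOrder A] [StarOrderedRing A]
    (f : A →L[ℂ] ℂ) (hf : ∀ x, 0 ≤ f (star x * x)) {x y : A} (h : x ≤ y) :
    (f x).re ≤ (f y).re := by
  obtain ⟨z, hz⟩ := CStarAlgebra.nonneg_iff_eq_star_mul_self.1 (sub_nonneg.2 h)
  have := (Complex.nonneg_iff.1 (hf z)).1
  rw [← hz, map_sub, Complex.sub_re] at this
  linarith

theorem exists_limit {A : Type*} [NonUnitalCStarAlgebra A] (ψ : ℕ → A →L[ℂ] ℂ)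
    (hψ1 : ∀ m x, ‖ψ m x‖ ≤ ‖x‖) (U : Ultrafilter ℕ) :
    ∃ ω : A →L[ℂ] ℂ, ∀ x, Tendsto (fun m => ψ m x) U (𝓝 (ω x)) := by
  have hK := WeakDual.isCompact_closedBall (𝕜 := ℂ) (E := A) 0 1
  obtain ⟨ω, -, hω⟩ := hK.ultrafilter_le_nhds (U.map fun m => StrongDual.toWeakDual (ψ m)) (by
    rw [le_principal_iff]
    refine Ultrafilter.mem_map.2 (Filter.univ_mem' fun m => ?_)
    simp only [Set.mem_preimage, Metric.mem_closedBall, dist_zero_right]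
    exact (ψ m).opNorm_le_bound zero_le_one (fun x => by simpa using hψ1 m x))
  refine ⟨WeakDual.toStrongDual ω, fun x => ?_⟩
  have : Tendsto (fun m => StrongDual.toWeakDual (ψ m)) U (𝓝 ω) := hω
  exact ((WeakDual.eval_continuous x).tendsto ω).comp this

theorem sel_step {A : Type*} [NonUnitalCStarAlgebra A] [PartialOrder A] [StarOrderedRing A]
    (φ ψ : ℕ → A →L[ℂ] ℂ) (hψ : ∀ m x, 0 ≤ ψ m (star x * x)) (hψ1 : ∀ m x, ‖ψ m x‖ ≤ ‖x‖)
    (hφψ : ∀ m x, ‖φ m x‖ ^ 2 ≤ (ψ m (x * star x)).re)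
    (r : ℝ)
    (hl1 : ∀ (s : Finset ℕ) (σ : ℕ → ℝ), (∀ m, |σ m| = 1) →
      r * s.card ≤ ‖∑ m ∈ s, (σ m : ℂ) • φ m‖)
    (ω : A →L[ℂ] ℂ) (U : Ultrafilter ℕ) (hU : (U : Filter ℕ) ≤ cofinite)
    (hω : ∀ x, Tendsto (fun m => ψ m x) U (𝓝 (ω x)))
    (ρ η τ c : ℝ) (hρ : 0 ≤ ρ) (hτ : 0 < τ) (hρη : ρ + η ≤ r) (hc : 0 ≤ c)
    (hcρ : c + τ ≤ ρ ^ 2) (s : SelState A) (hs : s.Valid φ U η) :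
    ∃ s' : SelState A, s'.Valid φ U η ∧ s.idx < s'.idx ∧ 0 ≤ s'.el ∧ ‖s'.el‖ = 1 ∧
      c < (ψ s'.idx s'.el).re ∧ (∀ x, s'.el * s'.E x = 0) ∧
      ∀ d : A, IsSelfAdjoint d → (∀ x, d * s.E x = 0) →
        d * s'.el = 0 ∧ ∀ x, d * s'.E x = 0 := by
  have hφ1 : ∀ m x, ‖φ m x‖ ≤ ‖x‖ := by
    intro m x
    refine abs_le_of_sq_le_sq' ?_ (norm_nonneg x) |>.2
    calc ‖φ m x‖ ^ 2 ≤ (ψ m (x * star x)).re := hφψ m x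
      _ ≤ ‖ψ m (x * star x)‖ := Complex.re_le_norm _
      _ ≤ ‖x * star x‖ := hψ1 _ _
      _ = ‖x‖ ^ 2 := by rw [CStarRing.norm_self_mul_star, sq]
  have hωpos : ∀ x, 0 ≤ ω (star x * x) := fun x =>
    ge_of_tendsto (hω _) (Eventually.of_forall fun m => hψ m x)
  have hω1 : ∀ x, ‖ω x‖ ≤ ‖x‖ := fun x =>
    le_of_tendsto (hω x).norm (Eventually.of_forall fun m => hψ1 m x)
  have hinf : ∀ T ∈ U, T.Infinite := by
    intro T hT hfin
    have h1 : Tᶜ ∈ (U : Filter ℕ) := hU (by simpa using hfin)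
    exact U.compl_mem_iff_notMem.1 h1 hT
  have htail : {m | s.idx < m} ∈ (U : Filter ℕ) := hU (by
    rw [Nat.cofinite_eq_atTop]; exact eventually_gt_atTop _)
  have hM : s.S ∩ {m | s.idx < m} ∈ U := inter_mem hs.mem htail
  -- the smallness parameter
  set κ : ℝ := (η - s.er) / 2 with hκ
  have hκ0 : 0 < κ := by have := hs.er_lt; simp only [hκ]; linarith
  have her := hs.er_lt
  have her0 := hs.er_nonneg
  obtain ⟨m, ⟨hmS, hmidx⟩, x, hx1, hx2, hx3⟩ := step_exists φ ω hωpos hω1 hφ1 r hl1 _ (hinf _ hM)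
    s.E hs.contr s.er ρ her0 hρ (by linarith) (fun m hm => hs.close m hm.1)
    (κ ^ 2 * τ) (by positivity)
  set y := s.E x with hy
  have hyn : ‖y‖ ≤ 1 := (hs.contr x).trans hx1
  set a := y * star y with ha
  have ha0 : 0 ≤ a := mul_star_self_nonneg y
  have ha1 : ‖a‖ ≤ 1 := by
    rw [ha, CStarRing.norm_self_mul_star]; nlinarith [norm_nonneg y]
  obtain ⟨b, p, hb0, hpsa, hb1, hab, hbp, hpp, hp2, hbb⟩ := exists_cut a ha0 ha1 τ hτ
  have hψb : c < (ψ m b).re := by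
    have h1 : ρ ^ 2 < (ψ m a).re := lt_of_lt_of_le (by gcongr) (hφψ m y)
    have h2 : (ψ m (a - b)).re ≤ τ := (Complex.re_le_norm _).trans ((hψ1 _ _).trans hab)
    rw [map_sub, Complex.sub_re] at h2
    linarith
  have hbn : 0 < ‖b‖ := by
    rw [norm_pos_iff]
    rintro rfl
    simp at hψb
    linarith
  have hbsa : IsSelfAdjoint b := .of_nonneg hb0
  refine ⟨⟨m, (‖b‖⁻¹ : ℝ) • b, s.S ∩ {n | (ψ n a).re < κ ^ 2 * τ},
    s.E - (LinearMap.mulLeft ℂ p) ∘ₗ s.E, s.er + κ⟩, ⟨?_, ?_, ?_, ?_, ?_⟩, hmidx, ?_, ?_, ?_, ?_, ?_⟩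
  · refine inter_mem hs.mem ?_
    exact ((Complex.continuous_re.tendsto _).comp (hω a)).eventually_lt_const hx2
  · intro z
    exact (norm_sub_mul_contr p hpsa hp2 (s.E z)).trans (hs.contr z)
  · simp only; linarith
  · simp only [hκ]; linarith
  · rintro n ⟨hn1, hn2⟩ z
    have h1 := hs.close n hn1 z
    set w := s.E z with hw
    have h2 : ‖φ n (p * w)‖ ≤ κ * ‖z‖ := by
      refine abs_le_of_sq_le_sq' ?_ (by positivity) |>.2
      have h3 : (p * w) * star (p * w) ≤ (‖w‖ ^ 2 * τ⁻¹) • a := by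
        have e : (p * w) * star (p * w) = p * (w * star w) * star p := by
          rw [star_mul]; simp only [mul_assoc]
        rw [e, mul_smul]
        refine (CStarAlgebra.star_right_conjugate_le_norm_smul (.mul_star_self w)).trans ?_
        rw [CStarRing.norm_self_mul_star, ← sq, hpsa.star_eq]
        exact smul_le_smul_of_nonneg_left hpp (by positivity)
      have h4 := (hφψ n (p * w)).trans (pos_mono (ψ n) (hψ n) h3)
      have e2 : (ψ n ((‖w‖ ^ 2 * τ⁻¹) • a)).re = ‖w‖ ^ 2 * τ⁻¹ * (ψ n a).re := by
        have : (‖w‖ ^ 2 * τ⁻¹) • a = ((‖w‖ ^ 2 * τ⁻¹ : ℝ) : ℂ) • a := rfl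
        rw [this, map_smul, smul_eq_mul, Complex.re_ofReal_mul]
      rw [e2] at h4
      refine h4.trans ?_
      calc ‖w‖ ^ 2 * τ⁻¹ * (ψ n a).re ≤ ‖w‖ ^ 2 * τ⁻¹ * (κ ^ 2 * τ) := by
            gcongr; exact le_of_lt hn2
        _ = (κ * ‖w‖) ^ 2 := by field_simp
        _ ≤ (κ * ‖z‖) ^ 2 := by gcongr; exact hs.contr z
    have e3 : φ n z - φ n ((s.E - (LinearMap.mulLeft ℂ p) ∘ₗ s.E) z)
        = (φ n z - φ n w) + φ n (p * w) := by
      simp [← hw]; ring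
    simp only [e3]
    refine (norm_add_le _ _).trans ?_
    linarith
  · exact smul_nonneg (by positivity) hb0
  · simp only [norm_smul, norm_inv, norm_norm]; exact inv_mul_cancel₀ hbn.ne'
  · have : (‖b‖⁻¹ : ℝ) • b = ((‖b‖⁻¹ : ℝ) : ℂ) • b := rfl
    simp only [this, map_smul, smul_eq_mul, Complex.re_ofReal_mul]
    have h1 : 1 ≤ ‖b‖⁻¹ := (one_le_inv₀ hbn).2 hb1
    nlinarith
  · intro z
    have : b * (s.E z - p * s.E z) = 0 := by
      rw [mul_sub, ← mul_assoc, hbp, sub_self]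
    simp only [smul_mul_assoc]
    erw [this]
    simp
  · intro d hd hdE
    have hda : d * a = 0 := by rw [ha, ← mul_assoc, hy, hdE, zero_mul]
    constructor
    · simp only [mul_smul_comm, annih_of_sq_le d a b 1 hd hbsa hda hbb, smul_zero]
    · intro z
      have hdp := annih_of_sq_le d a p _ hd hpsa hda hpp
      have : d * (s.E z - p * s.E z) = 0 := by
        rw [mul_sub, ← mul_assoc, hdp, hdE, zero_mul, sub_zero]
      exact this

theorem sel_core {A : Type*} [NonUnitalCStarAlgebra A] [PartialOrder A] [StarOrderedRing A]
    (φ ψ : ℕ → A →L[ℂ] ℂ) (hψ : ∀ m x, 0 ≤ ψ m (star x * x)) (hψ1 : ∀ m x, ‖ψ m x‖ ≤ ‖x‖)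
    (hφψ : ∀ m x, ‖φ m x‖ ^ 2 ≤ (ψ m (x * star x)).re)
    (r : ℝ) (hr : 0 < r)
    (hl1 : ∀ (s : Finset ℕ) (σ : ℕ → ℝ), (∀ m, |σ m| = 1) →
      r * s.card ≤ ‖∑ m ∈ s, (σ m : ℂ) • φ m‖) (c : ℝ) (hc : c < r ^ 2) :
    ∃ mn : ℕ → ℕ, StrictMono mn ∧ ∃ a : ℕ → A, (∀ n, 0 ≤ a n ∧ ‖a n‖ = 1) ∧
      (∀ i j, i ≠ j → a i * a j = 0) ∧ ∀ n, c < (ψ (mn n) (a n)).re := by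
  wlog hc0 : 0 ≤ c generalizing c
  · obtain ⟨mn, h1, a, h2, h3, h4⟩ := this 0 (by positivity) le_rfl
    exact ⟨mn, h1, a, h2, h3, fun n => lt_trans (by linarith) (h4 n)⟩
  set ρ := √((c + r ^ 2) / 2) with hρ
  have hρ0 : 0 ≤ ρ := Real.sqrt_nonneg _
  have hρ2 : ρ ^ 2 = (c + r ^ 2) / 2 := Real.sq_sqrt (by positivity)
  have hρr : ρ < r := by
    rw [hρ, Real.sqrt_lt' hr]; linarith
  obtain ⟨ω, hω⟩ := exists_limit ψ hψ1 (hyperfilter ℕ)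
  have step := fun s : {s : SelState A // s.Valid φ (hyperfilter ℕ) (r - ρ)} =>
    sel_step φ ψ hψ hψ1 hφψ r hl1 ω (hyperfilter ℕ) hyperfilter_le_cofinite hω ρ (r - ρ)
      (ρ ^ 2 - c) c hρ0 (by linarith) (by linarith) hc0 (by linarith) s.1 s.2
  choose nxt hv hidx hpos hnorm hval hann hpres using step
  let s0 : {s : SelState A // s.Valid φ (hyperfilter ℕ) (r - ρ)} :=
    ⟨⟨0, 0, Set.univ, LinearMap.id, 0⟩, ⟨univ_mem, fun x => le_rfl, le_rfl, by simpa using hρr,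
      fun m _ x => by simp⟩⟩
  let sq : ℕ → {s : SelState A // s.Valid φ (hyperfilter ℕ) (r - ρ)} := fun n =>
    Nat.rec s0 (fun _ s => ⟨nxt s, hv s⟩) n
  have hsq : ∀ n, (sq (n + 1)).1 = nxt (sq n) := fun n => rfl
  have hsa : ∀ n, IsSelfAdjoint (sq (n + 1)).1.el := fun n => by
    rw [hsq]; exact .of_nonneg (hpos _)
  have hE : ∀ i k x, (sq (i + 1)).1.el * (sq (i + 1 + k)).1.E x = 0 := by
    intro i k
    induction k with
    | zero => intro x; exact hann (sq i) x
    | succ k ih => exact (hpres (sq (i + 1 + k)) _ (hsa i) ih).2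
  have hlt : ∀ i j, i < j → (sq (i + 1)).1.el * (sq (j + 1)).1.el = 0 := by
    intro i j hij
    obtain ⟨k, rfl⟩ : ∃ k, j = i + 1 + k := ⟨j - (i + 1), by omega⟩
    exact (hpres (sq (i + 1 + k)) _ (hsa i) (hE i k)).1
  refine ⟨fun n => (sq (n + 1)).1.idx, strictMono_nat_of_lt_succ fun n => hidx (sq (n + 1)),
    fun n => (sq (n + 1)).1.el, fun n => ⟨hpos (sq n), hnorm (sq n)⟩, ?_, fun n => hval (sq n)⟩
  intro i j hij
  rcases lt_or_gt_of_ne hij with h | h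
  · exact hlt i j h
  · have := congrArg star (hlt j i h)
    rwa [star_mul, (hsa i).star_eq, (hsa j).star_eq, star_zero] at this

end PartFour

section PartFive

theorem absValue_props {A : Type*} [NonUnitalCStarAlgebra A] (ψ absψ : A →L[ℂ] ℂ)
    (h : IsAbsValue ψ absψ) (hn : ‖ψ‖ = 1) :
    (∀ x, 0 ≤ absψ (star x * x)) ∧ (∀ x, ‖absψ x‖ ≤ ‖x‖) ∧
      ∀ x, ‖ψ x‖ ^ 2 ≤ (absψ (x * star x)).re := by
  obtain ⟨W⟩ := h
  let := W.instRing
  let := W.instStarRing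
  let := W.instCStar
  let := W.instAlg
  let := W.instStarMod
  have hb : ∀ b, ‖W.absΦ b‖ ≤ ‖b‖ := fun b => by
    have := W.absΦ.le_opNorm b
    rwa [W.habsΦnorm, hn, one_mul] at this
  refine ⟨fun x => ?_, fun x => ?_, fun x => ?_⟩
  · rw [← W.habsψ, W.ι_mul, W.ι_star]; exact W.habsΦpos _
  · rw [← W.habsψ, ← W.ι_isometry]; exact hb _
  · have h1 := pos_cauchy_schwarz (W.absΦ : W.B →ₗ[ℂ] ℂ) W.habsΦpos (star (W.ι x)) W.u
    rw [star_star] at h1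
    change ‖W.absΦ (W.ι x * W.u)‖ ^ 2 ≤ (W.absΦ (W.ι x * star (W.ι x))).re *
      (W.absΦ (star W.u * W.u)).re at h1
    rw [← W.hpolar, W.hΦ, ← W.ι_star, ← W.ι_mul, W.habsψ] at h1
    have h2 : (W.absΦ (star W.u * W.u)).re ≤ 1 := by
      refine (Complex.re_le_norm _).trans ((hb _).trans ?_)
      rw [CStarRing.norm_star_mul_self]
      nlinarith [W.hu1, norm_nonneg W.u]
    have h3 : 0 ≤ (absψ (x * star x)).re := by
      rw [← W.habsψ, W.ι_mul, W.ι_star]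
      have := W.habsΦpos (star (W.ι x))
      rw [star_star] at this
      exact (Complex.nonneg_iff.1 this).1
    nlinarith

theorem opNorm_starred_le {A : Type*} [NonUnitalCStarAlgebra A] (f g : A →L[ℂ] ℂ)
    (h : ∀ x, g x = starRingEnd ℂ (f (star x))) : ‖g‖ ≤ ‖f‖ := by
  refine g.opNorm_le_bound (norm_nonneg f) fun x => ?_
  rw [h, RCLike.norm_conj, ← norm_star x]
  exact f.le_opNorm _

theorem opNorm_starred {A : Type*} [NonUnitalCStarAlgebra A] (f g : A →L[ℂ] ℂ)
    (h : ∀ x, g x = starRingEnd ℂ (f (star x))) : ‖g‖ = ‖f‖ :=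
  le_antisymm (opNorm_starred_le f g h) (opNorm_starred_le g f fun x => by simp [h])

end PartFive

/-- Let `(φ m)` be a normalized sequence in the dual of a C*-algebra `A`
spanning `ℓ¹` `r`-isomorphically.  Then for every `ε > 0` there are a
subsequence `(φ (mn n))`, pairwise orthogonal positive normalized `(a n)` and
pairwise orthogonal positive normalized `(b n)` in `A`, with
`|φ (mn n)| (a n) > (1-ε) r²` and `|φ* (mn n)| (b n) > (1-ε) r²` for all `n`. -/
theorem l1_isomorphic_gives_orthogonal_norming_elements
    {A : Type*} [NonUnitalCStarAlgebra A] [PartialOrder A] [StarOrderedRing A]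
    (r : ℝ) (hr : 0 < r)
    (φ φstar absφ absφstar : ℕ → (A →L[ℂ] ℂ))
    (hφnorm : ∀ m, ‖φ m‖ = 1)
    (hφstar : ∀ m x, φstar m x = starRingEnd ℂ (φ m (star x)))
    (habs : ∀ m, IsAbsValue (φ m) (absφ m))
    (habsstar : ∀ m, IsAbsValue (φstar m) (absφstar m))
    (hl1 : ∀ α : ℕ → ℂ, Summable (fun m => ‖α m‖) →
      r * ∑' m, ‖α m‖ ≤ ‖∑' m, α m • φ m‖ ∧ ‖∑' m, α m • φ m‖ ≤ ∑' m, ‖α m‖)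
    (ε : ℝ) (hε : 0 < ε) :
    ∃ mn : ℕ → ℕ, StrictMono mn ∧ ∃ a b : ℕ → A,
      (∀ n, 0 ≤ a n ∧ ‖a n‖ = 1) ∧ (∀ n, 0 ≤ b n ∧ ‖b n‖ = 1) ∧
      (∀ i j, i ≠ j → a i * a j = 0) ∧ (∀ i j, i ≠ j → b i * b j = 0) ∧
      ∀ n, (1 - ε) * r ^ 2 < (absφ (mn n) (a n)).re ∧
        (1 - ε) * r ^ 2 < (absφstar (mn n) (b n)).re := by
  have hfin : ∀ (s : Finset ℕ) (σ : ℕ → ℝ), (∀ m, |σ m| = 1) →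
      r * s.card ≤ ‖∑ m ∈ s, (σ m : ℂ) • φ m‖ := by
    classical
    intro s σ hσ
    have h := (hl1 (fun m => if m ∈ s then (σ m : ℂ) else 0)
      (summable_of_ne_finset_zero (s := s) (fun m hm => by simp [hm]))).1
    rw [tsum_eq_sum (s := s) (fun m hm => by simp [hm]),
      tsum_eq_sum (s := s) (fun m hm => by
        simp only [if_neg hm]; exact zero_smul ℂ (φ m))] at h
    have e1 : ∑ m ∈ s, ‖(if m ∈ s then (σ m : ℂ) else 0)‖ = s.card := by
      rw [Finset.sum_congr rfl (g := fun _ => (1 : ℝ))]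
      · simp
      · intro m hm
        rw [if_pos hm, Complex.norm_real, Real.norm_eq_abs, hσ]
    have e2 : ∑ m ∈ s, (if m ∈ s then (σ m : ℂ) else 0) • φ m = ∑ m ∈ s, (σ m : ℂ) • φ m :=
      Finset.sum_congr rfl fun m hm => by rw [if_pos hm]
    rw [e1, e2] at h
    exact h
  have hc : (1 - ε) * r ^ 2 < r ^ 2 := by nlinarith [sq_pos_of_pos hr]
  have hP := fun m => absValue_props (φ m) (absφ m) (habs m) (hφnorm m)
  have hQ := fun m => absValue_props (φstar m) (absφstar m) (habsstar m)
    ((opNorm_starred (φ m) (φstar m) (hφstar m)).trans (hφnorm m))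
  obtain ⟨m1, hm1, a, ha1, ha2, ha3⟩ := sel_core φ absφ (fun m => (hP m).1) (fun m => (hP m).2.1)
    (fun m => (hP m).2.2) r hr hfin _ hc
  obtain ⟨m2, hm2, b, hb1, hb2, hb3⟩ := sel_core (fun n => φstar (m1 n)) (fun n => absφstar (m1 n))
    (fun m => (hQ _).1) (fun m => (hQ _).2.1) (fun m => (hQ _).2.2) r hr (by
      intro s σ hσ
      have h := hfin (s.map ⟨m1, hm1.injective⟩) (fun m => σ (Function.invFun m1 m))
        (fun m => hσ _)
      rw [Finset.card_map, Finset.sum_map] at h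
      simp only [Function.Embedding.coeFn_mk,
        Function.leftInverse_invFun hm1.injective _] at h
      refine h.trans (le_of_eq (opNorm_starred _ _ fun x => ?_).symm)
      simp [sum_apply, hφstar]) _ hc
  exact ⟨m1 ∘ m2, hm1.comp hm2, a ∘ m2, b, fun n => ha1 _, hb1,
    fun i j hij => ha2 _ _ (fun h => hij (hm2.injective h)), hb2, fun n => ⟨ha3 _, hb3 n⟩⟩
end

section
/- Let A be a C*-algebra and (φ_m) a bounded sequence in A' spanning ℓ¹ almost isometrically. Then for every ε > 0 there exist a subsequence (φ_{m_n}), pairwise orthogonal positive normalized elements (a_n) in A, and pairwise orthogonal positive normalized elements (b_n) in A, such that ‖φ_{m_n} − b_n·φ_{m_n}·a_n‖ < ε for all n ∈ ℕ, where (b·φ·a)(x) = φ(axb). -/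
open Filter Topology

/-- A sequence of nonzero functionals spans `ℓ¹` almost isometrically. -/
def SpansL1AlmostIsometrically {X : Type*} [NormedAddCommGroup X] [NormedSpace ℂ X]
    (x : ℕ → X) : Prop :=
  ∃ δ : ℕ → ℝ, (∀ m, δ m ∈ Set.Ico (0 : ℝ) 1) ∧ Tendsto δ atTop (nhds 0) ∧
    ∀ (m : ℕ) (α : ℕ → ℂ), Summable (fun n => ‖α n‖) →
      (1 - δ m) * ∑' n, ‖α (n + m)‖ ≤
          ‖∑' n, α (n + m) • (‖x (n + m)‖⁻¹ • x (n + m))‖ ∧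
        ‖∑' n, α (n + m) • (‖x (n + m)‖⁻¹ • x (n + m))‖ ≤ ∑' n, ‖α (n + m)‖

/-- `(b · φ · a) x = φ (a * x * b)`. -/
noncomputable def twoSidedFunctional {A : Type*} [NonUnitalCStarAlgebra A]
    (φ : A →L[ℂ] ℂ) (a b : A) : A →L[ℂ] ℂ :=
  φ.comp ((((ContinuousLinearMap.mul ℂ A).flip b).comp (ContinuousLinearMap.mul ℂ A a)))

section helpers

variable {A : Type*} [NonUnitalCStarAlgebra A] [PartialOrder A] [StarOrderedRing A]

lemma aux_sq_le {a : A} (ha : 0 ≤ a) (ha1 : ‖a‖ ≤ 1) : a * a ≤ a := by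
  have hr : CFC.sqrt a * CFC.sqrt a = a := CFC.sqrt_mul_sqrt_self a ha
  have hs : star (CFC.sqrt a) = CFC.sqrt a := (IsSelfAdjoint.of_nonneg (CFC.sqrt_nonneg a)).star_eq
  have h := CStarAlgebra.star_left_conjugate_le_norm_smul (a := CFC.sqrt a) (b := a)
    (hb := IsSelfAdjoint.of_nonneg ha)
  rw [hs, hr] at h
  have h2 : CFC.sqrt a * a * CFC.sqrt a = a * a := by
    calc CFC.sqrt a * a * CFC.sqrt a
        = CFC.sqrt a * (CFC.sqrt a * CFC.sqrt a) * CFC.sqrt a := by rw [hr]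
      _ = (CFC.sqrt a * CFC.sqrt a) * (CFC.sqrt a * CFC.sqrt a) := by simp only [mul_assoc]
      _ = a * a := by rw [hr]
  rw [h2] at h
  refine h.trans ?_
  have : 0 ≤ (1 - ‖a‖) • a := smul_nonneg (by linarith) ha
  rw [sub_smul, one_smul] at this
  exact sub_nonneg.mp this

lemma aux_norm_sq_le {z w : A} (h : star z * z ≤ w) : ‖z‖ ^ 2 ≤ ‖w‖ := by
  have := CStarAlgebra.norm_le_norm_of_nonneg_of_le (star_mul_self_nonneg z) h
  rwa [CStarRing.norm_star_mul_self, ← sq] at this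

/-- row-type inequality for the pair `(a, 1 - a)`. -/
lemma aux_pair {a : A} (ha : 0 ≤ a) (ha1 : ‖a‖ ≤ 1) (x y : A) :
    ‖a * y + (x - a * x)‖ ^ 2 ≤ ‖y‖ ^ 2 + ‖x‖ ^ 2 := by
  have hs : star a = a := (IsSelfAdjoint.of_nonneg ha).star_eq
  have hd : 0 ≤ a - a * a := sub_nonneg.mpr (aux_sq_le ha ha1)
  have key : star (a * y + (x - a * x)) * (a * y + (x - a * x)) ≤ star y * y + star x * x := by
    rw [← sub_nonneg]
    have e : star y * y + star x * x - star (a * y + (x - a * x)) * (a * y + (x - a * x))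
      = star (y - a * y - a * x) * (y - a * y - a * x)
        + (star y * (a - a * a) * y + star y * (a - a * a) * y)
        + (star x * (a - a * a) * x + star x * (a - a * a) * x) := by
      simp only [star_add, star_sub, star_mul, hs]
      noncomm_ring
    rw [e]
    have h1 := star_left_conjugate_nonneg hd y
    have h2 := star_left_conjugate_nonneg hd x
    exact add_nonneg (add_nonneg (star_mul_self_nonneg _) (add_nonneg h1 h1)) (add_nonneg h2 h2)
  refine (aux_norm_sq_le key).trans ((norm_add_le _ _).trans ?_)
  rw [CStarRing.norm_star_mul_self, CStarRing.norm_star_mul_self, sq, sq]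

lemma aux_contr {a : A} (ha : 0 ≤ a) (ha1 : ‖a‖ ≤ 1) (x : A) : ‖x - a * x‖ ≤ ‖x‖ := by
  have := aux_pair ha ha1 x 0
  simp only [mul_zero, zero_add, norm_zero, ne_eq, OfNat.ofNat_ne_zero, not_false_eq_true,
    zero_pow] at this
  exact le_of_sq_le_sq this (norm_nonneg _)

lemma aux_contr_right {a : A} (ha : 0 ≤ a) (ha1 : ‖a‖ ≤ 1) (x : A) : ‖x - x * a‖ ≤ ‖x‖ := by
  have := aux_contr ha ha1 (star x)
  have hs : star a = a := (IsSelfAdjoint.of_nonneg ha).star_eq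
  rw [← norm_star (x - x * a), ← norm_star x]
  simpa [hs] using this

lemma aux_ext (ρ : A →ₗ[ℝ] ℝ) (hρ : ∀ x, ρ x ≤ ‖x‖) {a y : A} (ha : 0 ≤ a) (ha1 : ‖a‖ ≤ 1)
    (hy : ‖y‖ ≤ 1) {t : ℝ} (ht : 0 < t) (h : 1 - t ^ 2 / 2 ≤ ρ (a * y)) {x : A} (hx : ‖x‖ ≤ 1) :
    ρ (x - a * x) ≤ t := by
  have h1 := aux_pair ha ha1 (t • x) y
  have h2 := hρ (a * y + (t • x - a * (t • x)))
  have e : t • x - a * (t • x) = t • (x - a * x) := by rw [mul_smul_comm, smul_sub]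
  rw [e, map_add, map_smul, smul_eq_mul] at h2
  rw [e] at h1
  have h3 : ‖t • x‖ ≤ t := by
    rw [norm_smul, Real.norm_of_nonneg ht.le]; nlinarith
  have h4 : ‖a * y + t • (x - a * x)‖ ≤ 1 + t ^ 2 / 2 := by
    apply le_of_sq_le_sq _ (by positivity)
    nlinarith [norm_nonneg y, norm_nonneg (t • x), sq_nonneg (t^2)]
  nlinarith

lemma aux_row {ι : Type*} (s : Finset ι) (u x : ι → A) (h : ‖∑ i ∈ s, u i * star (u i)‖ ≤ 1) :
    ‖∑ i ∈ s, u i * x i‖ ^ 2 ≤ ∑ i ∈ s, ‖x i‖ ^ 2 := by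
  set z := ∑ i ∈ s, u i * x i with hz
  set S := ∑ i ∈ s, u i * star (u i) with hS
  have hSn : 0 ≤ S := Finset.sum_nonneg fun i _ => mul_star_self_nonneg _
  have h1 : star z * S * z ≤ star z * z := by
    refine (CStarAlgebra.star_left_conjugate_le_norm_smul (a := z) (b := S)
      (hb := IsSelfAdjoint.of_nonneg hSn)).trans ?_
    have : 0 ≤ (1 - ‖S‖) • (star z * z) := smul_nonneg (by linarith) (star_mul_self_nonneg z)
    rw [sub_smul, one_smul] at this
    exact sub_nonneg.mp this
  have h2 : 0 ≤ ∑ i ∈ s, star (x i - star (u i) * z) * (x i - star (u i) * z) :=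
    Finset.sum_nonneg fun i _ => star_mul_self_nonneg _
  have h3 : ∑ i ∈ s, star (x i - star (u i) * z) * (x i - star (u i) * z)
      = ∑ i ∈ s, star (x i) * x i - star z * z - star z * z + star z * S * z := by
    have e1 : star z * z = ∑ i ∈ s, star z * (u i * x i) := by rw [← Finset.mul_sum]
    have e2 : star z * z = ∑ i ∈ s, star (u i * x i) * z := by
      rw [← Finset.sum_mul, ← star_sum]
    have e3 : star z * S * z = ∑ i ∈ s, star z * (u i * star (u i)) * z := by
      rw [← Finset.sum_mul, ← Finset.mul_sum]
    rw [e3]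
    nth_rewrite 1 [e1]
    rw [e2]
    rw [← Finset.sum_sub_distrib, ← Finset.sum_sub_distrib, ← Finset.sum_add_distrib]
    refine Finset.sum_congr rfl fun i _ => ?_
    simp only [star_sub, star_mul, star_star]
    noncomm_ring
  have h4 : star z * z ≤ ∑ i ∈ s, star (x i) * x i := by
    rw [h3] at h2
    rw [← sub_nonneg]
    have := add_nonneg h2 (sub_nonneg.mpr h1)
    convert this using 1
    abel
  refine (aux_norm_sq_le h4).trans ((norm_sum_le _ _).trans (le_of_eq ?_))
  refine Finset.sum_congr rfl fun i _ => ?_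
  rw [CStarRing.norm_star_mul_self, sq]

lemma aux_sum_mono {ι : Type*} [Fintype ι] (s : Finset ι) (u : ι → A)
    (h : ‖∑ i, u i * star (u i)‖ ≤ 1) : ‖∑ i ∈ s, u i * star (u i)‖ ≤ 1 := by
  refine le_trans (CStarAlgebra.norm_le_norm_of_nonneg_of_le
    (Finset.sum_nonneg fun i _ => mul_star_self_nonneg _) ?_) h
  exact Finset.sum_le_sum_of_subset_of_nonneg (Finset.subset_univ s)
    fun i _ _ => mul_star_self_nonneg _

lemma aux_parseval {ι : Type*} [Fintype ι] [DecidableEq ι] [Nonempty ι] (W : ι → ι → ℂ)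
    (hW : ∀ s t, ∑ i, star (W i s) * W i t = if s = t then (Fintype.card ι : ℂ) else 0)
    (x : ι → A) (hx : ∀ s, ‖x s‖ ≤ 1) (u : ι → A)
    (hu : ∀ i, u i = (Fintype.card ι : ℂ)⁻¹ • ∑ s, star (W i s) • x s) :
    ‖∑ i, u i * star (u i)‖ ≤ 1 := by
  have hN : (Fintype.card ι : ℂ) ≠ 0 := by exact_mod_cast Fintype.card_ne_zero
  have e : ∑ i, u i * star (u i) = (Fintype.card ι : ℂ)⁻¹ • ∑ s, x s * star (x s) := by
    have e1 : ∀ i, u i * star (u i) = ((Fintype.card ι : ℂ)⁻¹ * (Fintype.card ι : ℂ)⁻¹) •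
        ∑ s, ∑ t, (star (W i s) * W i t) • (x s * star (x t)) := by
      intro i
      rw [hu i, star_smul, smul_mul_smul_comm, star_sum, Finset.sum_mul_sum]
      congr 1
      · simp
      · refine Finset.sum_congr rfl fun s _ => Finset.sum_congr rfl fun t _ => ?_
        rw [star_smul, star_star, smul_mul_smul_comm]
    simp only [e1]
    rw [← Finset.smul_sum, mul_smul]
    congr 1
    rw [Finset.sum_comm, Finset.smul_sum]
    refine Finset.sum_congr rfl fun s _ => ?_
    rw [Finset.sum_comm]
    simp only [← Finset.sum_smul, hW]
    simp [smul_smul]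
  rw [e, norm_smul, norm_inv, Complex.norm_natCast]
  have hc : (0:ℝ) < Fintype.card ι := by exact_mod_cast Fintype.card_pos
  rw [inv_mul_le_iff₀ hc, mul_one]
  refine (norm_sum_le _ _).trans ?_
  have : ∀ s ∈ (Finset.univ : Finset ι), ‖x s * star (x s)‖ ≤ 1 := by
    intro s _
    rw [CStarRing.norm_self_mul_star]
    nlinarith [hx s, norm_nonneg (x s)]
  simpa using Finset.sum_le_sum this

lemma aux_fun : ∃ F K : ℝ → ℝ, Continuous F ∧ Continuous K ∧ F 0 = 0 ∧ K 0 = 0 ∧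
    (∀ t : ℝ, t ≤ 1 / 2 → F t = 0) ∧
    (∀ t : ℝ, 1 / 2 < t → t * F t = 2 * t - 1 ∧ t * K t = 1 ∧ K t ≤ 2) ∧
    (∀ t : ℝ, t ≤ 1 / 2 → K t ≤ 2) ∧ (∀ t : ℝ, 0 ≤ t → 0 ≤ K t) := by
  have hinv : Continuous fun t : ℝ => (max t (1 / 2))⁻¹ := by
    refine Continuous.inv₀ (by fun_prop) fun t => ?_
    have : (1 / 2 : ℝ) ≤ max t (1 / 2) := le_max_right _ _
    linarith
  set F : ℝ → ℝ := fun t => 2 - (max t (1 / 2))⁻¹ with hF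
  set K : ℝ → ℝ := fun t => min (4 * t) (max t (1 / 2))⁻¹ with hK
  have hFc : Continuous F := by fun_prop
  have hKc : Continuous K := by fun_prop
  have hF0 : F 0 = 0 := by norm_num [hF]
  have hK0 : K 0 = 0 := by norm_num [hK]
  have hlow : ∀ t : ℝ, t ≤ 1 / 2 → F t = 0 := by
    intro t ht
    simp only [hF, max_eq_right ht]; norm_num
  have hhigh : ∀ t : ℝ, 1 / 2 < t → t * F t = 2 * t - 1 ∧ t * K t = 1 ∧ K t ≤ 2 := by
    intro t ht
    have ht0 : 0 < t := by linarith
    have e : t⁻¹ ≤ 4 * t := by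
      rw [inv_le_iff_one_le_mul₀ ht0]; nlinarith
    have e2 : t * t⁻¹ = 1 := mul_inv_cancel₀ ht0.ne'
    simp only [hF, hK, max_eq_left ht.le, min_eq_right e]
    refine ⟨by rw [mul_sub, e2]; ring, e2, ?_⟩
    nlinarith
  have hKlow : ∀ t : ℝ, t ≤ 1 / 2 → K t ≤ 2 := by
    intro t ht
    refine (min_le_right _ _).trans ?_
    rw [max_eq_right ht]; norm_num
  have hKnn : ∀ t : ℝ, 0 ≤ t → 0 ≤ K t := by
    intro t ht
    exact le_min (by linarith) (inv_nonneg.mpr (ht.trans (le_max_left _ _)))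
  exact ⟨F, K, hFc, hKc, hF0, hK0, hlow, hhigh, hKlow, hKnn⟩

set_option maxHeartbeats 1000000 in
lemma aux_cfc {h : A} (hh : 0 ≤ h) (hh1 : ‖h‖ ≤ 1) :
    ∃ a g f' k : A, 0 ≤ a ∧ ‖a‖ ≤ 1 ∧ 0 ≤ g ∧ ‖g‖ ≤ 1 ∧ a * g = a ∧ a = h * f' ∧ g = h * k ∧
      ‖k‖ ≤ 2 ∧ ∀ u : A, u * star u = h → ‖u + (1 / 4 : ℝ) • (u - a * u)‖ ≤ 1 := by
  have hsa : IsSelfAdjoint h := IsSelfAdjoint.of_nonneg hh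
  have hspec : ∀ t ∈ quasispectrum ℝ h, 0 ≤ t ∧ t ≤ 1 := by
    intro t ht
    refine ⟨quasispectrum_nonneg_of_nonneg h hh t ht, ?_⟩
    have h1 := norm_apply_le_norm_cfcₙ (fun t : ℝ => t) h ht
    rw [cfcₙ_id' ℝ h] at h1
    exact (le_abs_self t).trans (h1.trans hh1)
  obtain ⟨F, K, hFc, hKc, hF0, hK0, hlow, hhigh, hKlow, hKnn⟩ := aux_fun
  have hid : cfcₙ (fun t : ℝ => t) h = h := cfcₙ_id' ℝ h
  have ha : cfcₙ (fun t => t * F t) h = h * cfcₙ F h := by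
    rw [cfcₙ_mul (fun t : ℝ => t) F h continuousOn_id rfl hFc.continuousOn hF0, hid]
  have hg : cfcₙ (fun t => t * K t) h = h * cfcₙ K h := by
    rw [cfcₙ_mul (fun t : ℝ => t) K h continuousOn_id rfl hKc.continuousOn hK0, hid]
  have hfv : ∀ t : ℝ, 0 ≤ t → t ≤ 1 → 0 ≤ t * F t ∧ t * F t ≤ 1 := by
    intro t h0 h1
    rcases le_or_gt t (1 / 2) with h2 | h2
    · rw [hlow t h2]; norm_num
    · rw [(hhigh t h2).1]; constructor <;> linarith
  have hgv : ∀ t : ℝ, 0 ≤ t → t ≤ 1 → 0 ≤ t * K t ∧ t * K t ≤ 1 := by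
    intro t h0 h1
    rcases le_or_gt t (1 / 2) with h2 | h2
    · have := hKlow t h2
      have := hKnn t h0
      constructor <;> nlinarith
    · rw [(hhigh t h2).2.1]; norm_num
  have hapos : 0 ≤ cfcₙ (fun t => t * F t) h :=
    cfcₙ_nonneg fun t ht => (hfv t (hspec t ht).1 (hspec t ht).2).1
  refine ⟨cfcₙ (fun t => t * F t) h, cfcₙ (fun t => t * K t) h, cfcₙ F h, cfcₙ K h, hapos,
    ?_, ?_, ?_, ?_, ha, hg, ?_, ?_⟩
  · refine norm_cfcₙ_le fun t ht => ?_
    have := hfv t (hspec t ht).1 (hspec t ht).2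
    rw [Real.norm_of_nonneg this.1]; exact this.2
  · exact cfcₙ_nonneg fun t ht => (hgv t (hspec t ht).1 (hspec t ht).2).1
  · refine norm_cfcₙ_le fun t ht => ?_
    have := hgv t (hspec t ht).1 (hspec t ht).2
    rw [Real.norm_of_nonneg this.1]; exact this.2
  · rw [← cfcₙ_mul (fun t => t * F t) (fun t => t * K t) h (by fun_prop) (by simp) (by fun_prop)
      (by simp)]
    refine cfcₙ_congr fun t ht => ?_
    rcases le_or_gt t (1 / 2) with h2 | h2
    · simp [hlow t h2]
    · simp [(hhigh t h2).2.1]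
  · refine norm_cfcₙ_le fun t ht => ?_
    rw [Real.norm_of_nonneg (hKnn t (hspec t ht).1)]
    rcases le_or_gt t (1 / 2) with h2 | h2
    · exact hKlow t h2
    · exact (hhigh t h2).2.2
  · intro u hu
    set a := cfcₙ (fun t => t * F t) h with hadef
    have hs : star a = a := (IsSelfAdjoint.of_nonneg hapos).star_eq
    have e1 : (u + (1 / 4 : ℝ) • (u - a * u)) * star (u + (1 / 4 : ℝ) • (u - a * u))
        = (25 / 16 : ℝ) • h - (5 / 16 : ℝ) • (a * h + h * a) + (1 / 16 : ℝ) • (a * h * a) := by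
      have : star (u + (1 / 4 : ℝ) • (u - a * u)) =
          star u + (1 / 4 : ℝ) • (star u - star u * a) := by
        simp [hs]
      rw [this, ← hu]
      simp only [mul_add, add_mul, smul_mul_assoc, mul_smul_comm, mul_sub, sub_mul, smul_sub,
        smul_add, mul_assoc]
      module
    have e2 : (25 / 16 : ℝ) • h - (5 / 16 : ℝ) • (a * h + h * a) + (1 / 16 : ℝ) • (a * h * a)
        = cfcₙ (fun t : ℝ => (25 / 16 : ℝ) • t - (5 / 16 : ℝ) • ((t * F t) * t + t * (t * F t))
          + (1 / 16 : ℝ) • ((t * F t) * t * (t * F t))) h := by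
      rw [cfcₙ_add (fun t : ℝ => (25 / 16 : ℝ) • t - (5 / 16 : ℝ) • ((t * F t) * t + t * (t * F t)))
        (fun t : ℝ => (1 / 16 : ℝ) • ((t * F t) * t * (t * F t))) h (by fun_prop) (by simp)
          (by fun_prop) (by simp),
        cfcₙ_sub (fun t : ℝ => (25 / 16 : ℝ) • t)
          (fun t : ℝ => (5 / 16 : ℝ) • ((t * F t) * t + t * (t * F t))) h (by fun_prop) (by simp)
          (by fun_prop) (by simp),
        cfcₙ_smul (25 / 16 : ℝ) (fun t : ℝ => t) h,
        cfcₙ_smul (5 / 16 : ℝ) (fun t : ℝ => (t * F t) * t + t * (t * F t)) h (by fun_prop)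
          (by simp),
        cfcₙ_add (fun t : ℝ => (t * F t) * t) (fun t : ℝ => t * (t * F t)) h (by fun_prop) (by simp)
          (by fun_prop) (by simp),
        cfcₙ_smul (1 / 16 : ℝ) (fun t : ℝ => (t * F t) * t * (t * F t)) h (by fun_prop)
          (by simp),
        cfcₙ_mul (fun t : ℝ => (t * F t) * t) (fun t : ℝ => t * F t) h (by fun_prop) (by simp)
          (by fun_prop) (by simp),
        cfcₙ_mul (fun t : ℝ => t * F t) (fun t : ℝ => t) h (by fun_prop) (by simp)
          (by fun_prop) (by simp),
        cfcₙ_mul (fun t : ℝ => t) (fun t : ℝ => t * F t) h (by fun_prop) (by simp)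
          (by fun_prop) (by simp), hid]
    have e3 : ‖u + (1 / 4 : ℝ) • (u - a * u)‖ * ‖u + (1 / 4 : ℝ) • (u - a * u)‖ ≤ 1 := by
      rw [← CStarRing.norm_self_mul_star, e1, e2]
      refine norm_cfcₙ_le fun t ht => ?_
      obtain ⟨h0, h1⟩ := hspec t ht
      have e : (25 / 16 : ℝ) • t - (5 / 16 : ℝ) • ((t * F t) * t + t * (t * F t))
          + (1 / 16 : ℝ) • ((t * F t) * t * (t * F t)) = t * (5 / 4 - (t * F t) / 4) ^ 2 := by
        simp only [smul_eq_mul]; ring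
      rw [e, Real.norm_of_nonneg (by positivity)]
      rcases le_or_gt t (1 / 2) with h2 | h2
      · rw [hlow t h2]; norm_num; linarith
      · rw [(hhigh t h2).1]
        nlinarith [mul_nonneg (sq_nonneg (1 - t)) (sub_nonneg.mpr h1), sq_nonneg (1 - t)]
    nlinarith [norm_nonneg (u + (1 / 4 : ℝ) • (u - a * u))]

/-- Everything needed about the left side. -/
lemma aux_left (ρ : A →ₗ[ℝ] ℝ) (hρ : ∀ x, ρ x ≤ ‖x‖) {a u : A} (ha : 0 ≤ a) (ha1 : ‖a‖ ≤ 1)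
    (hu1 : ‖u‖ ≤ 1) (hau : ‖u + (1 / 4 : ℝ) • (u - a * u)‖ ≤ 1)
    {t : ℝ} (ht : 0 < t) (ht1 : t < 1) (h : 1 - t ^ 2 / 10 ≤ ρ u) :
    a ≠ 0 ∧ ∀ x, ‖x‖ ≤ 1 → ρ (x - (‖a‖⁻¹ • a) * x) ≤ t := by
  have h1 : 1 - t ^ 2 / 2 ≤ ρ (a * u) := by
    have := (hρ _).trans hau
    rw [map_add, map_smul, map_sub, smul_eq_mul] at this
    linarith
  have hane : a ≠ 0 := by
    rintro rfl
    rw [zero_mul, map_zero] at h1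
    nlinarith
  have hpos : 0 < ‖a‖ := norm_pos_iff.mpr hane
  refine ⟨hane, fun x hx => ?_⟩
  refine aux_ext ρ hρ (a := ‖a‖⁻¹ • a) (y := u) (smul_nonneg (by positivity) ha) ?_ hu1 ht ?_ hx
  · rw [norm_smul, norm_inv, norm_norm, inv_mul_cancel₀ hpos.ne']
  · rw [smul_mul_assoc, map_smul, smul_eq_mul]
    refine h1.trans ?_
    have h2 : 1 ≤ ‖a‖⁻¹ := (one_le_inv₀ hpos).mpr ha1
    have h3 : 0 ≤ ρ (a * u) := by nlinarith
    nlinarith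

lemma aux_rot (χ : A →ₗ[ℂ] ℂ) {s : ℝ} (h : ∀ x, ‖x‖ ≤ 1 → (χ x).re ≤ s) (x : A) :
    ‖χ x‖ ≤ s * ‖x‖ := by
  rcases eq_or_ne x 0 with rfl | hx
  · simp
  have hxp : 0 < ‖x‖ := norm_pos_iff.mpr hx
  obtain ⟨θ, hθ, hθ2⟩ := Complex.exists_norm_eq_mul_self (χ x)
  have h1 := h ((((‖x‖⁻¹ : ℝ) : ℂ) * θ) • x) (by
    rw [norm_smul, norm_mul, hθ, Complex.norm_real, norm_inv, norm_norm, mul_one,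
      inv_mul_cancel₀ hxp.ne'])
  rw [map_smul, smul_eq_mul, mul_assoc, ← hθ2, Complex.re_ofReal_mul, Complex.ofReal_re,
    inv_mul_le_iff₀ hxp] at h1
  linarith

/-- Real part as a real functional. -/
noncomputable def auxReL (ψ : A →L[ℂ] ℂ) : A →ₗ[ℝ] ℝ where
  toFun x := (ψ x).re
  map_add' x y := by simp
  map_smul' r x := by
    have : ψ (r • x) = (r : ℂ) • ψ x := by
      rw [← map_smul]; rfl
    rw [this]; simp

/-- Real part composed with the involution. -/
noncomputable def auxReR (ψ : A →L[ℂ] ℂ) : A →ₗ[ℝ] ℝ where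
  toFun x := (ψ (star x)).re
  map_add' x y := by simp
  map_smul' r x := by
    have : ψ (star (r • x)) = (r : ℂ) • ψ (star x) := by
      rw [← map_smul, star_smul]; rfl
    rw [this]; simp

lemma auxReL_le {ψ : A →L[ℂ] ℂ} (h : ‖ψ‖ ≤ 1) (x : A) : auxReL ψ x ≤ ‖x‖ := by
  refine (Complex.re_le_norm _).trans ((ψ.le_opNorm x).trans ?_)
  nlinarith [norm_nonneg x]

lemma auxReR_le {ψ : A →L[ℂ] ℂ} (h : ‖ψ‖ ≤ 1) (x : A) : auxReR ψ x ≤ ‖x‖ := by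
  refine (Complex.re_le_norm _).trans ((ψ.le_opNorm _).trans ?_)
  rw [norm_star]
  nlinarith [norm_nonneg x]

lemma aux_pick {ι : Type*} [Fintype ι] (ψ : ι → A →L[ℂ] ℂ) (hψ : ∀ i, ‖ψ i‖ ≤ 1)
    (w : ι → ℂ) (hw : ∀ i, ‖w i‖ = 1) {κ : ℝ} (h : (Fintype.card ι : ℝ) - κ < ‖∑ i, w i • ψ i‖) :
    ∃ x : A, ‖x‖ ≤ 1 ∧ ∀ i, 1 - κ ≤ (w i * ψ i x).re := by
  classical
  obtain ⟨x, hx, hx2⟩ := ContinuousLinearMap.exists_lt_apply_of_lt_opNorm _ h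
  obtain ⟨θ, hθ, hθ2⟩ := Complex.exists_norm_eq_mul_self ((∑ i, w i • ψ i) x)
  have hxn : ‖θ • x‖ ≤ 1 := by rw [norm_smul, hθ, one_mul]; exact hx.le
  refine ⟨θ • x, hxn, fun i => ?_⟩
  have h1 : (Fintype.card ι : ℝ) - κ < ∑ j, (w j * ψ j (θ • x)).re := by
    rw [← Complex.re_sum]
    have e : ∑ j, w j * ψ j (θ • x) = θ * (∑ i, w i • ψ i) x := by
      rw [ContinuousLinearMap.sum_apply, Finset.mul_sum]
      refine Finset.sum_congr rfl fun j _ => ?_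
      simp only [map_smul, smul_eq_mul, ContinuousLinearMap.smul_apply]
      ring
    rw [e, ← hθ2, Complex.ofReal_re]
    exact hx2
  have h2 : ∀ j, (w j * ψ j (θ • x)).re ≤ 1 := by
    intro j
    refine (Complex.re_le_norm _).trans ?_
    rw [norm_mul, hw, one_mul]
    refine ((ψ j).le_opNorm _).trans ?_
    nlinarith [hψ j, norm_nonneg (ψ j), norm_nonneg (θ • x)]
  rw [← Finset.add_sum_erase _ _ (Finset.mem_univ i)] at h1
  have h3 : ∑ j ∈ Finset.univ.erase i, (w j * ψ j (θ • x)).re ≤ (Fintype.card ι : ℝ) - 1 := by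
    refine (Finset.sum_le_sum fun j _ => h2 j).trans ?_
    rw [Finset.sum_const, Finset.card_erase_of_mem (Finset.mem_univ i), Finset.card_univ,
      nsmul_eq_mul, mul_one, Nat.cast_sub (Fintype.card_pos_iff.mpr ⟨i⟩), Nat.cast_one]
  linarith

lemma aux_half {ι : Type*} [Fintype ι] (ρ : A →ₗ[ℝ] ℝ) (hρ : ∀ x, ρ x ≤ ‖x‖) (u : ι → A)
    (hu : ‖∑ i, u i * star (u i)‖ ≤ 1) (hu1 : ∀ i, ‖u i‖ ≤ 1) {s : ℝ} (hs : 0 < s) (I : Finset ι)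
    (hI : ∀ i ∈ I, ∃ x, ‖x‖ ≤ 1 ∧ s < ρ (u i * star (u i) * x)) : (I.card : ℝ) * s ^ 2 ≤ 1 := by
  choose! x hx hx2 using hI
  have h1 : (I.card : ℝ) * s ≤ ρ (∑ i ∈ I, u i * (star (u i) * x i)) := by
    rw [map_sum, ← nsmul_eq_mul, ← Finset.sum_const]
    refine Finset.sum_le_sum fun i hi => ?_
    rw [← mul_assoc]; exact (hx2 i hi).le
  have h2 := aux_row I u (fun i => star (u i) * x i) (aux_sum_mono I u hu)
  have h3 : ∑ i ∈ I, ‖star (u i) * x i‖ ^ 2 ≤ I.card := by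
    rw [← mul_one (I.card : ℝ), ← nsmul_eq_mul, ← Finset.sum_const]
    refine Finset.sum_le_sum fun i hi => ?_
    have : ‖star (u i) * x i‖ ≤ 1 := by
      refine (norm_mul_le _ _).trans ?_
      rw [norm_star]
      nlinarith [hu1 i, hx i hi, norm_nonneg (u i), norm_nonneg (x i)]
    nlinarith [norm_nonneg (star (u i) * x i)]
  have h4 := h1.trans (hρ _)
  have h5 : ((I.card : ℝ) * s) ^ 2 ≤ I.card := (pow_le_pow_left₀ (by positivity) h4 2).trans (h2.trans h3)
  rcases Nat.eq_zero_or_pos I.card with h0 | h0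
  · rw [h0]; norm_num
  · have h0' : (0 : ℝ) < I.card := by exact_mod_cast h0
    have : (I.card : ℝ) * ((I.card : ℝ) * s ^ 2) ≤ I.card * 1 := by nlinarith
    exact le_of_mul_le_mul_left this h0'

lemma aux_norm_of_sum {ι : Type*} [Fintype ι] (u : ι → A)
    (hu : ‖∑ i, u i * star (u i)‖ ≤ 1) (i : ι) : ‖u i‖ ≤ 1 := by
  have := aux_sum_mono {i} u hu
  rw [Finset.sum_singleton, CStarRing.norm_self_mul_star] at this
  nlinarith [norm_nonneg (u i)]

lemma aux_pigeon {ι : Type*} [Fintype ι] (ψ : A →L[ℂ] ℂ) (hψ : ‖ψ‖ ≤ 1) (u : ι → A)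
    (hu : ‖∑ i, u i * star (u i)‖ ≤ 1) (hu' : ‖∑ i, star (u i) * u i‖ ≤ 1) {s : ℝ} (hs : 0 < s)
    (hN : 2 < (Fintype.card ι : ℝ) * s ^ 2) :
    ∃ i, (∀ x, ‖ψ (u i * star (u i) * x)‖ ≤ s * ‖x‖) ∧
      ∀ x, ‖ψ (x * (star (u i) * u i))‖ ≤ s * ‖x‖ := by
  classical
  have hu1 := aux_norm_of_sum u hu
  by_contra! hcon
  let IL : Finset ι := Finset.univ.filter fun i =>
    ∃ x, ‖x‖ ≤ 1 ∧ s < auxReL ψ (u i * star (u i) * x)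
  let IR : Finset ι := Finset.univ.filter fun i =>
    ∃ x, ‖x‖ ≤ 1 ∧ s < auxReR ψ (star (u i) * star (star (u i)) * x)
  have hL : (IL.card : ℝ) * s ^ 2 ≤ 1 :=
    aux_half (auxReL ψ) (auxReL_le hψ) u hu hu1 hs IL fun i hi => (Finset.mem_filter.mp hi).2
  have hR : (IR.card : ℝ) * s ^ 2 ≤ 1 :=
    aux_half (auxReR ψ) (auxReR_le hψ) (fun i => star (u i)) (by simpa using hu')
      (fun i => by simpa using hu1 i) hs IR fun i hi => (Finset.mem_filter.mp hi).2
  have hun : (Finset.univ : Finset ι) ⊆ IL ∪ IR := by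
    intro i _
    rw [Finset.mem_union]
    by_contra! hi
    simp only [IL, IR, Finset.mem_filter, Finset.mem_univ, true_and, not_exists, not_and,
      not_lt] at hi
    obtain ⟨x, hx⟩ := hcon i (fun x =>
      aux_rot (ψ.toLinearMap ∘ₗ LinearMap.mulLeft ℂ (u i * star (u i))) (fun y hy => hi.1 y hy) x)
    refine hx.not_ge (aux_rot (ψ.toLinearMap ∘ₗ LinearMap.mulRight ℂ (star (u i) * u i))
      (fun y hy => ?_) x)
    have := hi.2 (star y) (by simpa using hy)
    simpa [auxReR, mul_assoc] using this
  have hcard : (Fintype.card ι : ℝ) ≤ IL.card + IR.card := by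
    have := (Finset.card_le_card hun).trans (Finset.card_union_le IL IR)
    rw [Finset.card_univ] at this
    exact_mod_cast this
  nlinarith [sq_nonneg s]

lemma aux_finite {N : ℕ} [NeZero N] (ψ : ZMod N → A →L[ℂ] ℂ) (hψ : ∀ i, ‖ψ i‖ ≤ 1)
    (T : A →ₗ[ℂ] A) (hT : ∀ x, ‖T x‖ ≤ ‖x‖) {e κ : ℝ} (he : 0 ≤ e)
    (hTe : ∀ i x, ‖ψ i (x - T x)‖ ≤ e * ‖x‖)
    (hlow : ∀ w : ZMod N → ℂ, (∀ i, ‖w i‖ = 1) → (N : ℝ) - κ < ‖∑ i, w i • ψ i‖) :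
    ∃ v : ZMod N → A, ‖∑ i, T (v i) * star (T (v i))‖ ≤ 1 ∧ ‖∑ i, star (T (v i)) * T (v i)‖ ≤ 1 ∧
      ∀ i, 1 - κ - e ≤ (ψ i (T (v i))).re := by
  classical
  let W : ZMod N → ZMod N → ℂ := fun i s => ZMod.stdAddChar (i * s)
  have hW1 : ∀ i s, ‖W i s‖ = 1 := fun i s => AddChar.norm_apply _ _
  have hconj : ∀ i s, star (W i s) = ZMod.stdAddChar (-(i * s)) := fun i s => by
    rw [AddChar.map_neg_eq_conj]; rfl
  have hW : ∀ s t, ∑ i, star (W i s) * W i t = if s = t then (Fintype.card (ZMod N) : ℂ) else 0 := by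
    intro s t
    have h1 := AddChar.sum_mulShift (t - s) (ZMod.isPrimitive_stdAddChar N)
    have h2 : ∀ i, star (W i s) * W i t = ZMod.stdAddChar (i * (t - s)) := by
      intro i
      rw [hconj, ← AddChar.map_add_eq_mul]
      congr 1; ring
    simp only [h2, h1, sub_eq_zero, eq_comm]
    split_ifs <;> simp
  have hW' : ∀ s t, ∑ i, star (star (W i s)) * star (W i t)
      = if s = t then (Fintype.card (ZMod N) : ℂ) else 0 := by
    intro s t
    have := hW t s
    simp only [star_star, mul_comm (W _ s)]
    rw [this]
    simp only [eq_comm]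
  have hp : ∀ s, ∃ x : A, ‖x‖ ≤ 1 ∧ ∀ i, 1 - κ ≤ (star (W i s) * ψ i x).re := fun s =>
    aux_pick ψ hψ (fun i => star (W i s)) (fun i => by rw [norm_star, hW1])
      (by rw [ZMod.card]; exact hlow _ (fun i => by rw [norm_star, hW1]))
  choose x hx hx2 using hp
  have hcN : (N : ℂ) ≠ 0 := by exact_mod_cast NeZero.ne N
  have hTv : ∀ i, T ((Fintype.card (ZMod N) : ℂ)⁻¹ • ∑ s, star (W i s) • x s)
      = (Fintype.card (ZMod N) : ℂ)⁻¹ • ∑ s, star (W i s) • T (x s) := by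
    intro i; simp
  refine ⟨fun i => (Fintype.card (ZMod N) : ℂ)⁻¹ • ∑ s, star (W i s) • x s, ?_, ?_, ?_⟩
  · exact aux_parseval W hW (fun s => T (x s)) (fun s => (hT _).trans (hx s)) _ hTv
  · have := aux_parseval (fun i s => star (W i s)) hW' (fun s => star (T (x s)))
      (fun s => by rw [norm_star]; exact (hT _).trans (hx s))
      (fun i => star (T ((Fintype.card (ZMod N) : ℂ)⁻¹ • ∑ s, star (W i s) • x s)))
      (fun i => by rw [hTv]; simp [star_sum, star_smul])
    simpa only [star_star] using this
  · intro i
    have hre : ∀ s, 1 - κ - e ≤ (star (W i s) * ψ i (T (x s))).re := by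
      intro s
      have h1 := hx2 s i
      have h2 : star (W i s) * ψ i (T (x s)) = star (W i s) * ψ i (x s)
          - star (W i s) * ψ i (x s - T (x s)) := by rw [map_sub]; ring
      have h3 : (star (W i s) * ψ i (x s - T (x s))).re ≤ e := by
        refine (Complex.re_le_norm _).trans ?_
        rw [norm_mul, norm_star, hW1, one_mul]
        refine (hTe i (x s)).trans ?_
        nlinarith [hx s, norm_nonneg (x s)]
      rw [h2, Complex.sub_re]
      linarith
    have e1 : ψ i (T ((Fintype.card (ZMod N) : ℂ)⁻¹ • ∑ s, star (W i s) • x s))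
        = (((N : ℝ)⁻¹ : ℝ) : ℂ) * ∑ s, star (W i s) * ψ i (T (x s)) := by
      rw [hTv, map_smul, map_sum, ZMod.card]
      simp
    rw [e1, Complex.re_ofReal_mul, Complex.re_sum]
    have hNp : (0 : ℝ) < N := by exact_mod_cast Nat.pos_of_ne_zero (NeZero.ne N)
    rw [le_inv_mul_iff₀ hNp]
    have := Finset.sum_le_sum (s := (Finset.univ : Finset (ZMod N))) fun s _ => hre s
    rw [Finset.sum_const, Finset.card_univ, ZMod.card, nsmul_eq_mul] at this
    exact this

/-- The properties kept during the recursion. -/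
def AuxGood (ψ : ℕ → A →L[ℂ] ℂ) (η : ℝ) (T : A →ₗ[ℂ] A) (K : Set ℕ) : Prop :=
  (∀ x, ‖T x‖ ≤ ‖x‖) ∧ K.Infinite ∧
    ∃ e : ℝ, 0 ≤ e ∧ e < η ∧ ∀ k ∈ K, ∀ x, ‖ψ k (x - T x)‖ ≤ e * ‖x‖

lemma aux_two_sided (ψ : A →L[ℂ] ℂ) {t : ℝ} (ht : 0 < t) {a b : A} (ha : ‖a‖ = 1)
    (h1 : ∀ x, ‖ψ (x - a * x)‖ ≤ t * ‖x‖) (h2 : ∀ x, ‖ψ (x - x * b)‖ ≤ t * ‖x‖) :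
    ‖ψ - twoSidedFunctional ψ a b‖ ≤ 2 * t := by
  refine ContinuousLinearMap.opNorm_le_bound _ (by positivity) fun x => ?_
  have e : (ψ - twoSidedFunctional ψ a b) x = ψ (x - a * x) + ψ (a * x - a * x * b) := by
    simp [twoSidedFunctional]
  rw [e]
  have h3 := h1 x
  have h4 := h2 (a * x)
  have h5 : ‖a * x‖ ≤ ‖x‖ := (norm_mul_le _ _).trans (by rw [ha, one_mul])
  have h6 := norm_add_le (ψ (x - a * x)) (ψ (a * x - a * x * b))
  nlinarith

lemma aux_step (ψ : ℕ → A →L[ℂ] ℂ) (hψ : ∀ n, ‖ψ n‖ ≤ 1)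
    (hlow : ∀ κ : ℝ, 0 < κ → ∀ N : ℕ, ∃ M : ℕ, ∀ (ι : Type) [Fintype ι], Fintype.card ι = N →
      ∀ k : ι → ℕ, Function.Injective k → (∀ i, M ≤ k i) →
      ∀ w : ι → ℂ, (∀ i, ‖w i‖ = 1) → (N : ℝ) - κ < ‖∑ i, w i • ψ (k i)‖)
    {t : ℝ} (ht : 0 < t) (ht1 : t < 1) (T : A →ₗ[ℂ] A) (K : Set ℕ)
    (hTK : AuxGood ψ (t ^ 2 / 10) T K) :
    ∃ (T' : A →ₗ[ℂ] A) (K' : Set ℕ) (m : ℕ) (a b : A), AuxGood ψ (t ^ 2 / 10) T' K' ∧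
      m ∈ K ∧ K' ⊆ K ∧ (∀ k ∈ K', m < k) ∧ 0 ≤ a ∧ ‖a‖ = 1 ∧ 0 ≤ b ∧ ‖b‖ = 1 ∧
      ‖ψ m - twoSidedFunctional (ψ m) a b‖ ≤ 2 * t ∧
      (∀ x, a * T' x = 0) ∧ (∀ x, T' x * b = 0) ∧
      (∀ c, (∀ x, c * T x = 0) → c * a = 0 ∧ ∀ x, c * T' x = 0) ∧
      (∀ d, (∀ x, T x * d = 0) → b * d = 0 ∧ ∀ x, T' x * d = 0) := by
  obtain ⟨hT, hK, e, he0, he, hTe⟩ := hTK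
  set η := t ^ 2 / 10 with hη
  set s := (η - e) / 8 with hs
  have hspos : 0 < s := by rw [hs]; linarith
  obtain ⟨N, hN⟩ := exists_nat_gt (2 / s ^ 2)
  have hN2 : 2 < (N : ℝ) * s ^ 2 := by
    rwa [div_lt_iff₀ (by positivity)] at hN
  have hN0 : N ≠ 0 := by
    rintro rfl
    norm_num at hN2
  have : NeZero N := ⟨hN0⟩
  obtain ⟨M, hM⟩ := hlow ((η - e) / 2) (by linarith) N
  have hK1 : (K \ Set.Iio M).Infinite := hK.sdiff (Set.finite_Iio M)
  let ν := hK1.natEmbedding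
  let k : ZMod N → ℕ := fun i => ν (ZMod.val i)
  have hkinj : Function.Injective k := fun i j hij =>
    ZMod.val_injective N (ν.injective (Subtype.ext hij))
  have hkK : ∀ i, k i ∈ K := fun i => (ν (ZMod.val i)).2.1
  have hkM : ∀ i, M ≤ k i := fun i => not_lt.mp (ν (ZMod.val i)).2.2
  obtain ⟨v, hv1, hv2, hv3⟩ := aux_finite (fun i => ψ (k i)) (fun i => hψ _) T hT he0
    (fun i => hTe _ (hkK i)) (hM (ZMod N) (ZMod.card N) k hkinj hkM)
  have hB : (K \ Set.Iic (∑ i, k i)).Infinite := hK.sdiff (Set.finite_Iic _)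
  obtain ⟨i, hi⟩ : ∃ i : ZMod N, {n ∈ K \ Set.Iic (∑ i, k i) |
      (∀ x, ‖ψ n (T (v i) * star (T (v i)) * x)‖ ≤ s * ‖x‖) ∧
      ∀ x, ‖ψ n (x * (star (T (v i)) * T (v i)))‖ ≤ s * ‖x‖}.Infinite := by
    by_contra! hcon
    refine hB ((Set.finite_iUnion hcon).subset fun n hn => ?_)
    obtain ⟨i, hi⟩ := aux_pigeon (ψ n) (hψ n) (fun i => T (v i)) hv1 hv2 hspos
      (by rw [ZMod.card]; exact hN2)
    exact Set.mem_iUnion.mpr ⟨i, hn, hi⟩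
  set u := T (v i) with hu
  have hu1 : ‖u‖ ≤ 1 := aux_norm_of_sum (fun i => T (v i)) hv1 i
  have hre : 1 - t ^ 2 / 10 ≤ (ψ (k i) u).re := by
    have := hv3 i
    simp only [← hu] at this
    linarith
  have hn1 : ‖u * star u‖ ≤ 1 := by
    rw [CStarRing.norm_self_mul_star]; nlinarith [norm_nonneg u]
  have hn2 : ‖star u * u‖ ≤ 1 := by
    rw [CStarRing.norm_star_mul_self]; nlinarith [norm_nonneg u]
  obtain ⟨a, g, f', κ', ha, ha1, hg, hg1, hag, haf, hgk, hk2, hau⟩ :=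
    aux_cfc (mul_star_self_nonneg u) hn1
  obtain ⟨b, p, q', r', hb, hb1, hp, hp1, hbp, hbq, hpr, hr2, hbu⟩ :=
    aux_cfc (star_mul_self_nonneg u) hn2
  have hsb : star b = b := (IsSelfAdjoint.of_nonneg hb).star_eq
  have hsp : star p = p := (IsSelfAdjoint.of_nonneg hp).star_eq
  have hpb : p * b = b := by
    have := congrArg star hbp
    rwa [star_mul, hsb, hsp] at this
  have hpr' : p = star r' * (star u * u) := by
    have := congrArg star hpr
    rwa [hsp, star_mul, star_mul, star_star] at this
  obtain ⟨hane, hal⟩ := aux_left (auxReL (ψ (k i))) (auxReL_le (hψ _)) ha ha1 hu1 (hau u rfl)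
    ht ht1 hre
  obtain ⟨hbne, hbl⟩ := aux_left (auxReR (ψ (k i))) (auxReR_le (hψ _)) (u := star u) hb hb1
    (by rwa [norm_star]) (hbu (star u) (by rw [star_star])) ht ht1
    (by simpa [auxReR] using hre)
  have hapos : 0 < ‖a‖ := norm_pos_iff.mpr hane
  have hbpos : 0 < ‖b‖ := norm_pos_iff.mpr hbne
  have hna : ‖‖a‖⁻¹ • a‖ = 1 := by
    rw [norm_smul, norm_inv, norm_norm, inv_mul_cancel₀ hapos.ne']
  have hnb : ‖‖b‖⁻¹ • b‖ = 1 := by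
    rw [norm_smul, norm_inv, norm_norm, inv_mul_cancel₀ hbpos.ne']
  let T1 : A →ₗ[ℂ] A := T - LinearMap.mulLeft ℂ g ∘ₗ T
  let T' : A →ₗ[ℂ] A := T1 - LinearMap.mulRight ℂ p ∘ₗ T1
  have hT1 : ∀ x, T1 x = T x - g * T x := fun x => by simp [T1]
  have hT' : ∀ x, T' x = T1 x - T1 x * p := fun x => by simp [T']
  have hT1n : ∀ x, ‖T1 x‖ ≤ ‖x‖ := fun x => by
    rw [hT1]; exact (aux_contr hg hg1 _).trans (hT x)
  have hT'n : ∀ x, ‖T' x‖ ≤ ‖x‖ := fun x => by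
    rw [hT']; exact (aux_contr_right hp hp1 _).trans (hT1n x)
  have haT1 : ∀ x, a * T1 x = 0 := fun x => by
    rw [hT1, mul_sub, ← mul_assoc, hag, sub_self]
  refine ⟨T', _, k i, ‖a‖⁻¹ • a, ‖b‖⁻¹ • b, ⟨hT'n, hi, (e + η) / 2, by linarith, by linarith, ?_⟩,
    hkK i, fun n hn => hn.1.1, ?_, smul_nonneg (by positivity) ha, hna,
    smul_nonneg (by positivity) hb, hnb, ?_, ?_, ?_, ?_, ?_⟩
  · rintro n ⟨hn, hnl, hnr⟩ x
    have e1 : ψ n (x - T' x) = ψ n (x - T x) + ψ n (u * star u * (κ' * T x))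
        + ψ n ((T1 x * star r') * (star u * u)) := by
      rw [← map_add, ← map_add]
      congr 1
      rw [mul_assoc (T1 x), ← hpr', ← mul_assoc (u * star u), ← hgk, hT', hT1]
      abel
    rw [e1]
    have h1 := hTe n hn.1 x
    have h2 := hnl (κ' * T x)
    have h3 := hnr (T1 x * star r')
    have h4 : ‖κ' * T x‖ ≤ 2 * ‖x‖ := (norm_mul_le _ _).trans
      (mul_le_mul hk2 (hT x) (norm_nonneg _) (by norm_num))
    have h5 : ‖T1 x * star r'‖ ≤ ‖x‖ * 2 := (norm_mul_le _ _).trans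
      (mul_le_mul (hT1n x) (by rwa [norm_star]) (norm_nonneg _) (norm_nonneg _))
    refine (norm_add₃_le).trans ?_
    have h6 : s * ‖κ' * T x‖ ≤ s * (2 * ‖x‖) := mul_le_mul_of_nonneg_left h4 hspos.le
    have h7 : s * ‖T1 x * star r'‖ ≤ s * (‖x‖ * 2) := mul_le_mul_of_nonneg_left h5 hspos.le
    have h8 : (e + η) / 2 * ‖x‖ = e * ‖x‖ + s * (2 * ‖x‖) + s * (‖x‖ * 2) := by
      rw [hs]; ring
    rw [h8]
    linarith
  · rintro n ⟨hn, -⟩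
    have h1 : k i ≤ ∑ i, k i := Finset.single_le_sum (fun _ _ => Nat.zero_le _) (Finset.mem_univ i)
    exact h1.trans_lt (not_le.mp hn.2)
  · refine aux_two_sided _ ht hna (fun x => ?_) (fun x => ?_)
    · exact aux_rot ((ψ (k i)).toLinearMap ∘ₗ
        (LinearMap.id - LinearMap.mulLeft ℂ (‖a‖⁻¹ • a))) (fun y hy => hal y hy) x
    · refine aux_rot ((ψ (k i)).toLinearMap ∘ₗ
        (LinearMap.id - LinearMap.mulRight ℂ (‖b‖⁻¹ • b))) (fun y hy => ?_) x
      have := hbl (star y) (by rwa [norm_star])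
      have e2 : star (star y - ‖b‖⁻¹ • b * star y) = y - y * (‖b‖⁻¹ • b) := by
        rw [star_sub, star_mul, star_star, star_smul, hsb]; simp
      change (ψ (k i) (star (star y - ‖b‖⁻¹ • b * star y))).re ≤ t at this
      rw [e2] at this
      exact this
  · intro x
    rw [smul_mul_assoc, hT', mul_sub, ← mul_assoc, haT1]; simp
  · intro x
    rw [mul_smul_comm, hT', sub_mul, mul_assoc, hpb, sub_self, smul_zero]
  · intro c hc
    have hcu : c * (u * star u) = 0 := by rw [← mul_assoc, hc (v i), zero_mul]
    refine ⟨by rw [mul_smul_comm, haf, ← mul_assoc, hcu, zero_mul, smul_zero], fun x => ?_⟩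
    have h1 : c * T1 x = 0 := by
      rw [hT1, mul_sub, hc, hgk, ← mul_assoc, ← mul_assoc, hcu]; simp
    rw [hT', mul_sub, ← mul_assoc, h1]; simp
  · intro d hd
    have hdu : (star u * u) * d = 0 := by rw [mul_assoc, hd (v i), mul_zero]
    have hbq' : b = star q' * (star u * u) := by
      have := congrArg star hbq
      rwa [hsb, star_mul, star_mul, star_star] at this
    refine ⟨by rw [smul_mul_assoc, hbq', mul_assoc, hdu, mul_zero, smul_zero], fun x => ?_⟩
    have h1 : T1 x * d = 0 := by
      rw [hT1, sub_mul, mul_assoc, hd]; simp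
    rw [hT', sub_mul, h1, hpr', mul_assoc, mul_assoc, hdu]; simp

lemma aux_tsum {X ι : Type*} [NormedAddCommGroup X] [Fintype ι] (G : ℕ → X) (k : ι → ℕ)
    (hk : Function.Injective k) (M : ℕ) (hkM : ∀ i, M ≤ k i)
    (hG : ∀ n, n ∉ Set.range k → G n = 0) : ∑' n, G (n + M) = ∑ i, G (k i) := by
  have h1 : ∑' n, G (n + M) = ∑' n, G n := by
    refine (add_left_injective M).tsum_eq (f := G) fun n hn => ?_
    by_contra hcon
    refine hn (hG n ?_)
    rintro ⟨i, rfl⟩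
    exact hcon ⟨k i - M, Nat.sub_add_cancel (hkM i)⟩
  have h2 : ∑' n, G n = ∑' i, G (k i) := by
    refine (hk.tsum_eq (f := G) fun n hn => ?_).symm
    by_contra hcon
    exact hn (hG n hcon)
  rw [h1, h2, tsum_fintype]

lemma aux_low (φ : ℕ → (A →L[ℂ] ℂ)) (hspan : SpansL1AlmostIsometrically φ) :
    ∀ κ : ℝ, 0 < κ → ∀ N : ℕ, ∃ M : ℕ, ∀ (ι : Type) [Fintype ι], Fintype.card ι = N →
      ∀ k : ι → ℕ, Function.Injective k → (∀ i, M ≤ k i) →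
      ∀ w : ι → ℂ, (∀ i, ‖w i‖ = 1) → (N : ℝ) - κ < ‖∑ i, w i • (‖φ (k i)‖⁻¹ • φ (k i))‖ := by
  obtain ⟨δ, hδ, hδ0, hl⟩ := hspan
  intro κ hκ N
  have hpos : 0 < κ / (N + 1) := by positivity
  obtain ⟨M, hM⟩ := ((tendsto_order.mp hδ0).2 _ hpos).exists
  refine ⟨M, ?_⟩
  intro ι _ hcard k hk hkM w hw
  have hM' : δ M * N < κ := by
    rw [lt_div_iff₀ (by positivity)] at hM
    nlinarith [(hδ M).1]
  let α : ℕ → ℂ := Function.extend k w 0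
  have hα : ∀ i, α (k i) = w i := fun i => hk.extend_apply w 0 i
  have hα0 : ∀ n, n ∉ Set.range k → α n = 0 := fun n hn => by
    simp only [α]
    rw [Function.extend_apply' _ _ _ (by simpa using hn)]; rfl
  have hsum : Summable fun n => ‖α n‖ := by
    refine summable_of_hasFiniteSupport ((Set.finite_range k).subset fun n hn => ?_)
    by_contra hcon
    exact hn (by simp [hα0 n hcon])
  have h := (hl M α hsum).1
  rw [aux_tsum (fun n => ‖α n‖) k hk M hkM (fun n hn => by simp [hα0 n hn]),
    aux_tsum (X := A →L[ℂ] ℂ) (fun n => α n • (‖φ n‖⁻¹ • φ n)) k hk M hkM (fun n hn => by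
      simp only [hα0 n hn]
      exact zero_smul ℂ (‖φ n‖⁻¹ • φ n))] at h
  simp only [hα, hw, Finset.sum_const, Finset.card_univ, hcard, nsmul_eq_mul, mul_one] at h
  refine lt_of_lt_of_le ?_ h
  linarith

end helpers

/-- If a bounded sequence `(φ m)` in the dual of a C*-algebra `A` spans `ℓ¹`
almost isometrically, then for every `ε > 0` there are a subsequence
`(φ (mn n))`, pairwise orthogonal positive normalized elements `(a n)` and
pairwise orthogonal positive normalized elements `(b n)` of `A`, with
`‖φ (mn n) - b_n · φ (mn n) · a_n‖ < ε` for all `n`. -/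
theorem almost_isometric_l1_compression_in_cstar_dual
    {A : Type*} [NonUnitalCStarAlgebra A] [PartialOrder A] [StarOrderedRing A]
    (φ : ℕ → (A →L[ℂ] ℂ))
    (hbdd : ∃ C : ℝ, ∀ m, ‖φ m‖ ≤ C)
    (hφ : ∀ m, φ m ≠ 0)
    (hspan : SpansL1AlmostIsometrically φ)
    (ε : ℝ) (hε : 0 < ε) :
    ∃ mn : ℕ → ℕ, StrictMono mn ∧ ∃ a b : ℕ → A,
      (∀ n, 0 ≤ a n ∧ ‖a n‖ = 1) ∧ (∀ n, 0 ≤ b n ∧ ‖b n‖ = 1) ∧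
      (∀ i j, i ≠ j → a i * a j = 0) ∧ (∀ i j, i ≠ j → b i * b j = 0) ∧
      ∀ n, ‖φ (mn n) - twoSidedFunctional (φ (mn n)) (a n) (b n)‖ < ε := by
  obtain ⟨C, hC⟩ := hbdd
  have hC0 : 0 < C := (norm_pos_iff.mpr (hφ 0)).trans_le (hC 0)
  let ψ : ℕ → A →L[ℂ] ℂ := fun n => ‖φ n‖⁻¹ • φ n
  have hψ : ∀ n, ‖ψ n‖ ≤ 1 := fun n => by
    simp only [ψ]
    rw [norm_smul, norm_inv, norm_norm, inv_mul_cancel₀ (norm_ne_zero_iff.mpr (hφ n))]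
  obtain ⟨t, ht, htmin⟩ : ∃ t : ℝ, 0 < t ∧ t < min 1 (ε / (2 * C)) :=
    exists_between (lt_min one_pos (by positivity))
  have ht1 : t < 1 := htmin.trans_le (min_le_left _ _)
  have ht2 : C * (2 * t) < ε := by
    have := htmin.trans_le (min_le_right _ _)
    rw [lt_div_iff₀ (by positivity)] at this
    linarith
  let St := {S : (A →ₗ[ℂ] A) × Set ℕ // AuxGood ψ (t ^ 2 / 10) S.1 S.2}
  have hstep : ∀ S : St, ∃ (S' : St) (m : ℕ) (a b : A),
      m ∈ S.1.2 ∧ S'.1.2 ⊆ S.1.2 ∧ (∀ k ∈ S'.1.2, m < k) ∧ 0 ≤ a ∧ ‖a‖ = 1 ∧ 0 ≤ b ∧ ‖b‖ = 1 ∧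
      ‖ψ m - twoSidedFunctional (ψ m) a b‖ ≤ 2 * t ∧
      (∀ x, a * S'.1.1 x = 0) ∧ (∀ x, S'.1.1 x * b = 0) ∧
      (∀ c, (∀ x, c * S.1.1 x = 0) → c * a = 0 ∧ ∀ x, c * S'.1.1 x = 0) ∧
      (∀ d, (∀ x, S.1.1 x * d = 0) → b * d = 0 ∧ ∀ x, S'.1.1 x * d = 0) := by
    intro S
    obtain ⟨T', K', m, a, b, hgood, h⟩ := aux_step ψ hψ (aux_low φ hspan) ht ht1 S.1.1 S.1.2 S.2
    exact ⟨⟨(T', K'), hgood⟩, m, a, b, h⟩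
  choose nxt m a b hm hsub hlt ha ha1 hb hb1 hclose haT hTb hc hd using hstep
  have h0 : AuxGood ψ (t ^ 2 / 10) LinearMap.id Set.univ :=
    ⟨fun x => le_rfl, Set.infinite_univ, 0, le_rfl, by positivity, fun k _ x => by simp⟩
  let S : ℕ → St := fun n => nxt^[n] ⟨(LinearMap.id, Set.univ), h0⟩
  have hS : ∀ n, S (n + 1) = nxt (S n) := fun n => Function.iterate_succ_apply' _ _ _
  have haS : ∀ i j, ∀ x, a (S i) * (S (i + 1 + j)).1.1 x = 0 := by
    intro i j
    induction j with
    | zero => intro x; rw [add_zero, hS]; exact haT _ x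
    | succ j ih =>
      intro x
      rw [← add_assoc, hS]
      exact (hc _ _ ih).2 x
  have hbS : ∀ i j, ∀ x, (S (i + 1 + j)).1.1 x * b (S i) = 0 := by
    intro i j
    induction j with
    | zero => intro x; rw [add_zero, hS]; exact hTb _ x
    | succ j ih =>
      intro x
      rw [← add_assoc, hS]
      exact (hd _ _ ih).2 x
  have haa : ∀ i j, i < j → a (S i) * a (S j) = 0 := by
    intro i j hij
    obtain ⟨l, rfl⟩ := Nat.exists_eq_add_of_le (Nat.succ_le_of_lt hij)
    exact (hc _ _ (haS i l)).1
  have hbb : ∀ i j, i < j → b (S j) * b (S i) = 0 := by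
    intro i j hij
    obtain ⟨l, rfl⟩ := Nat.exists_eq_add_of_le (Nat.succ_le_of_lt hij)
    exact (hd _ _ (hbS i l)).1
  have hsa : ∀ i, star (a (S i)) = a (S i) := fun i => (IsSelfAdjoint.of_nonneg (ha _)).star_eq
  have hsb : ∀ i, star (b (S i)) = b (S i) := fun i => (IsSelfAdjoint.of_nonneg (hb _)).star_eq
  refine ⟨fun n => m (S n), strictMono_nat_of_lt_succ fun n => ?_, fun n => a (S n),
    fun n => b (S n), fun n => ⟨ha _, ha1 _⟩, fun n => ⟨hb _, hb1 _⟩, ?_, ?_, ?_⟩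
  · refine hlt (S n) _ ?_
    rw [← hS]; exact hm _
  · intro i j hij
    rcases lt_or_gt_of_ne hij with h | h
    · exact haa i j h
    · have := congrArg star (haa j i h)
      rwa [star_mul, hsa, hsa, star_zero] at this
  · intro i j hij
    rcases lt_or_gt_of_ne hij with h | h
    · have := congrArg star (hbb i j h)
      rwa [star_mul, hsb, hsb, star_zero] at this
    · exact hbb j i h
  · intro n
    have h1 := hclose (S n)
    set k := m (S n) with hk
    have hne : ‖φ k‖ ≠ 0 := norm_ne_zero_iff.mpr (hφ k)
    have e : φ k - twoSidedFunctional (φ k) (a (S n)) (b (S n))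
        = ‖φ k‖ • (ψ k - twoSidedFunctional (ψ k) (a (S n)) (b (S n))) := by
      ext x
      simp only [ψ, twoSidedFunctional, ContinuousLinearMap.sub_apply, ContinuousLinearMap.smul_apply,
        ContinuousLinearMap.comp_apply, smul_sub, smul_smul, mul_inv_cancel₀ hne, one_smul]
    rw [e, norm_smul, norm_norm]
    refine lt_of_le_of_lt ?_ ht2
    exact mul_le_mul (hC k) h1 (norm_nonneg _) hC0.le
end
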